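/- arXiv:1603.08560 — 4 statements merged into one kernel-verified Lean document; each statement's English description precedes it below -/
import Mathlib

section
/- Every matrix in WS_{n,s,t}(K) has rank at most 2s + t, and this bound is attained, i.e., the maximal rank of a matrix in WS_{n,s,t}(K) equals 2s + t (assuming 2s + t ≤ n). -/
/-!
Every `M` in the space decomposes as `M = P + Q`, where `P` consists of the first `s` rows of `M`
and `Q` of the others. `P` has rank at most `s`; the block shape makes `Q` supported on the first
`s + t` columns, so its rank is at most `s + t`.

The bound is attained by the matrix `witness` with blocks `A = 0`, `B = 0`, `D = 1` and
`C = [1 0]`. It is the matrix of a partial involution of the first `2 * s + t` indices, so its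
square is the coordinate projection `proj K n (2 * s + t)`, of rank `2 * s + t`.
-/

open Matrix

def WSspace (K : Type*) [Field K] (n s t : ℕ) :
    Submodule K (Matrix (Fin n) (Fin n) K) where
  carrier := {M | Mᵀ = M ∧ ∀ i j : Fin n,
    ((s + t ≤ i.1 ∧ s ≤ j.1) ∨ (s ≤ i.1 ∧ s + t ≤ j.1)) → M i j = 0}
  add_mem' := by
    rintro a b ⟨ha1, ha2⟩ ⟨hb1, hb2⟩
    refine ⟨by rw [Matrix.transpose_add, ha1, hb1], fun i j h => ?_⟩
    simp [Matrix.add_apply, ha2 i j h, hb2 i j h]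
  zero_mem' := ⟨by simp, fun i j h => rfl⟩
  smul_mem' := by
    rintro c a ⟨ha1, ha2⟩
    refine ⟨by rw [Matrix.transpose_smul, ha1], fun i j h => ?_⟩
    simp [Matrix.smul_apply, ha2 i j h]

/-- The diagonal matrix projecting `K ^ n` onto its first `k` coordinates. -/
def proj (K : Type*) [Field K] (n k : ℕ) : Matrix (Fin n) (Fin n) K :=
  Matrix.diagonal fun i => if i.1 < k then 1 else 0

lemma rank_proj (K : Type*) [Field K] (n k : ℕ) (hk : k ≤ n) : (proj K n k).rank = k := by
  classical
  rw [proj, Matrix.rank_diagonal]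
  have e : {i : Fin n // (if i.1 < k then (1 : K) else 0) ≠ 0} ≃ Fin k :=
    { toFun := fun i => ⟨i.1.1, by
        have := i.2
        by_contra hc
        simp [hc] at this⟩
      invFun := fun i => ⟨⟨i.1, i.2.trans_le hk⟩, by simp [i.2]⟩
      left_inv := fun i => rfl
      right_inv := fun i => rfl }
  rw [Fintype.card_congr e, Fintype.card_fin]

/-- The involution of `{0, …, 2 * s + t - 1}` swapping its first `s` elements with its last `s`
elements in increasing order and fixing the `t` elements in between. Its values elsewhere are
irrelevant. -/
def swapEnds (s t i : ℕ) : ℕ :=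
  if i < s then i + (s + t) else if i < s + t then i else i - (s + t)

/-- The `n × n` matrix of the partial involution `swapEnds s t` of the first `2 * s + t`
indices. -/
def witness (K : Type*) [Field K] (n s t : ℕ) : Matrix (Fin n) (Fin n) K :=
  Matrix.of fun i j => if i.1 < 2 * s + t ∧ j.1 = swapEnds s t i.1 then 1 else 0

lemma witness_mem (K : Type*) [Field K] (n s t : ℕ) : witness K n s t ∈ WSspace K n s t := by
  refine ⟨?_, fun i j hij => ?_⟩
  · ext i j
    simp only [witness, Matrix.transpose_apply, Matrix.of_apply]
    congr 1
    simp only [swapEnds, eq_iff_iff]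
    split_ifs <;> omega
  · simp only [witness, Matrix.of_apply]
    rw [if_neg]
    simp only [swapEnds]
    split_ifs <;> omega

lemma witness_mul_self (K : Type*) [Field K] (n s t : ℕ) (h : 2 * s + t ≤ n) :
    witness K n s t * witness K n s t = proj K n (2 * s + t) := by
  ext i j
  rw [Matrix.mul_apply]
  by_cases hi : i.1 < 2 * s + t
  · have hlt : swapEnds s t i.1 < 2 * s + t := by
      simp only [swapEnds]
      split_ifs <;> omega
    have hinv : swapEnds s t (swapEnds s t i.1) = i.1 := by
      simp only [swapEnds]
      split_ifs <;> omega
    rw [Finset.sum_eq_single ⟨swapEnds s t i.1, hlt.trans_le h⟩]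
    · simp [witness, proj, hi, hlt, hinv, Matrix.diagonal_apply, Fin.ext_iff, eq_comm]
    · intro b _ hb
      have hb' : b.1 ≠ swapEnds s t i.1 := fun hc => hb (Fin.ext hc)
      simp [witness, hb']
    · simp
  · simp [witness, proj, hi, Matrix.diagonal_apply]

lemma rank_add_le_rank_add_rank {K : Type*} [Field K] {n : ℕ} (A B : Matrix (Fin n) (Fin n) K) :
    (A + B).rank ≤ A.rank + B.rank := by
  rw [Matrix.rank, Matrix.rank, Matrix.rank, Matrix.mulVecLin_add]
  exact (Submodule.finrank_mono (LinearMap.range_add_le _ _)).trans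
    (Submodule.finrank_add_le_finrank_add_finrank _ _)

lemma rank_le_of_mem (K : Type*) [Field K] (n s t : ℕ) (h : 2 * s + t ≤ n)
    (M : Matrix (Fin n) (Fin n) K) (hM : M ∈ WSspace K n s t) : M.rank ≤ 2 * s + t := by
  have hdec : M = proj K n s * M + (M - proj K n s * M) * proj K n (s + t) := by
    ext i j
    by_cases hi : i.1 < s
    · simp [proj, hi]
    · by_cases hj : j.1 < s + t
      · simp [proj, hi, hj]
      · simp [proj, hi, hj, hM.2 i j (Or.inr ⟨by omega, by omega⟩)]
  have h1 := Matrix.rank_mul_le_left (proj K n s) M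
  have h2 := Matrix.rank_mul_le_right (M - proj K n s * M) (proj K n (s + t))
  rw [rank_proj K n _ (by omega)] at h1 h2
  have h3 := rank_add_le_rank_add_rank (proj K n s * M) ((M - proj K n s * M) * proj K n (s + t))
  rw [← hdec] at h3
  omega

theorem urank_WSspace (K : Type*) [Field K] (n s t : ℕ) (h : 2 * s + t ≤ n) :
    (∀ M ∈ WSspace K n s t, M.rank ≤ 2 * s + t) ∧
      (∃ M ∈ WSspace K n s t, M.rank = 2 * s + t) := by
  refine ⟨rank_le_of_mem K n s t h, witness K n s t, witness_mem K n s t,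
    le_antisymm (rank_le_of_mem K n s t h _ (witness_mem K n s t)) ?_⟩
  have := Matrix.rank_mul_le_left (witness K n s t) (witness K n s t)
  rwa [witness_mul_self K n s t h, rank_proj K n _ h] at this
end

section
/- If t is odd, every matrix in WA_{n,s,t}(K) has rank at most 2s + t - 1, and this bound is attained, i.e., the maximal rank of a matrix in WA_{n,s,t}(K) equals 2s + t - 1 (assuming 2s + t ≤ n and s + t ≥ 1). -/
/-!
Both bounds come from the block shape of the matrices.

For the upper bound, a matrix of the space is a sum of three pieces: its first `s` rows, the rest of
its first `s` columns, and what remains, which is supported on the central `t × t` block. The first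
two pieces have rank at most `s`. The central block is alternating of odd size, so its determinant
vanishes (`det_eq_zero_of_alternating_of_odd`) and its rank is at most `t - 1`.

For the equality, `matchingMatrix` is the signed adjacency matrix of the matching which joins `i` to
`s + t + i` for `i < s`, and `s + 2k` to `s + 2k + 1` inside the central block. It covers
`2 * s + t - 1` indices; selecting the covered rows, and their partners as columns, gives an
invertible diagonal submatrix of that size.
-/

open Matrix

def WAspace (K : Type*) [Field K] (n s t : ℕ) :
    Submodule K (Matrix (Fin n) (Fin n) K) where
  carrier := {M | Mᵀ = -M ∧ (∀ i : Fin n, M i i = 0) ∧ ∀ i j : Fin n,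
    ((s + t ≤ i.1 ∧ s ≤ j.1) ∨ (s ≤ i.1 ∧ s + t ≤ j.1)) → M i j = 0}
  add_mem' := by
    rintro a b ⟨ha1, ha2, ha3⟩ ⟨hb1, hb2, hb3⟩
    refine ⟨by rw [Matrix.transpose_add, ha1, hb1]; abel, fun i => ?_, fun i j h => ?_⟩
    · simp [Matrix.add_apply, ha2 i, hb2 i]
    · simp [Matrix.add_apply, ha3 i j h, hb3 i j h]
  zero_mem' := ⟨by simp, fun i => rfl, fun i j h => rfl⟩
  smul_mem' := by
    rintro c a ⟨ha1, ha2, ha3⟩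
    refine ⟨by rw [Matrix.transpose_smul, ha1, smul_neg], fun i => ?_, fun i j h => ?_⟩
    · simp [Matrix.smul_apply, ha2 i]
    · simp [Matrix.smul_apply, ha3 i j h]

/-- An alternating matrix of odd size is singular, in any characteristic. In the Leibniz expansion
the terms of `σ` and `σ⁻¹` cancel, and an involution on an odd set has a fixed point, hence contributes `0`. -/
lemma det_eq_zero_of_alternating_of_odd {R ι : Type*} [CommRing R] [Fintype ι] [DecidableEq ι]
    (hι : Odd (Fintype.card ι)) (D : Matrix ι ι R) (hD : ∀ i j, D i j = -D j i)
    (hdiag : ∀ i, D i i = 0) : D.det = 0 := by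
  rw [Matrix.det_apply]
  refine Finset.sum_ninvolution (fun σ => σ⁻¹) (fun σ => ?_) (fun σ hσ hinv => hσ ?_)
    (fun _ => Finset.mem_univ _) (fun σ => inv_inv σ)
  · have h1 : ∏ i, D (σ⁻¹ i) i = -∏ i, D (σ i) i := by
      rw [← Equiv.prod_comp σ]
      simp only [Equiv.Perm.coe_inv, Equiv.symm_apply_apply]
      rw [Finset.prod_congr rfl (fun i _ => hD i (σ i)), Finset.prod_neg, Finset.card_univ,
        hι.neg_one_pow, neg_one_mul]
    rw [h1, Equiv.Perm.sign_inv, smul_neg, add_neg_cancel]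
  · have : Fact (Nat.Prime 2) := ⟨Nat.prime_two⟩
    obtain ⟨i, hi⟩ : ∃ i, σ i = i := by
      refine Equiv.Perm.exists_fixed_point_of_prime (p := 2) (n := 1) ?_ ?_
      · rwa [← even_iff_two_dvd, Nat.not_even_iff_odd]
      · rw [pow_one, pow_two]
        nth_rewrite 1 [← hinv]
        exact inv_mul_cancel σ
    rw [Finset.prod_eq_zero (Finset.mem_univ i) (by rw [hi, hdiag]), smul_zero]

lemma rank_lt_card_of_det_eq_zero {K ι : Type*} [Field K] [Fintype ι] [DecidableEq ι]
    (D : Matrix ι ι K) (hD : D.det = 0) : D.rank < Fintype.card ι := by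
  obtain ⟨v, hv, hDv⟩ := Matrix.exists_mulVec_eq_zero_iff.mpr hD
  have hker : 0 < Module.finrank K (LinearMap.ker D.mulVecLin) :=
    Module.finrank_pos_iff_exists_ne_zero.mpr ⟨⟨v, hDv⟩, fun h => hv (congrArg Subtype.val h)⟩
  have := D.mulVecLin.finrank_range_add_finrank_ker
  rw [Module.finrank_fintype_fun_eq_card] at this
  rw [Matrix.rank]
  omega

lemma matrix_rank_add_le {K m n : Type*} [Field K] [Fintype m] [Fintype n]
    (A B : Matrix m n K) : (A + B).rank ≤ A.rank + B.rank := by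
  rw [Matrix.rank, Matrix.mulVecLin_add]
  exact (Submodule.finrank_mono (LinearMap.range_add_le _ _)).trans
    (Submodule.finrank_add_le_finrank_add_finrank _ _)

lemma rank_le_of_rows_eq_zero {K : Type*} [Field K] {n s : ℕ} (A : Matrix (Fin n) (Fin n) K)
    (hA : ∀ i j, s ≤ i.1 → A i j = 0) : A.rank ≤ s := by
  refine (A.rank_le_card_of_support_subset (Finset.univ.filter fun i => i.1 < s) ?_).trans ?_
  · intro i hi
    by_contra hlt
    exact hi (funext fun j => hA i j (by simpa using hlt))
  · rw [Fin.card_filter_val_lt]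
    exact min_le_right _ _

/-- A matrix supported on the square block indexed by the range of `f` has rank at most that of the
block. -/
lemma rank_le_rank_submatrix {K m n : Type*} [Field K] [Fintype m] [Fintype n]
    (f : m → n) (hf : Function.Injective f) (A : Matrix n n K)
    (hrow : ∀ i j, i ∉ Set.range f → A i j = 0) (hcol : ∀ i j, j ∉ Set.range f → A i j = 0) :
    A.rank ≤ (A.submatrix f f).rank := by
  classical
  let E : Matrix n m K := Matrix.of fun i k => if i = f k then 1 else 0
  have hA : A = E * (A.submatrix f f * E.transpose) := by
    ext i j
    by_cases hi : i ∈ Set.range f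
    · obtain ⟨k, rfl⟩ := hi
      by_cases hj : j ∈ Set.range f
      · obtain ⟨l, rfl⟩ := hj
        simp [E, Matrix.mul_apply, hf.eq_iff]
      · have hE : ∀ l, j ≠ f l := fun l hl => hj ⟨l, hl.symm⟩
        simp [E, Matrix.mul_apply, hcol _ _ hj, hE]
    · have hE : ∀ l, i ≠ f l := fun l hl => hi ⟨l, hl.symm⟩
      simp [E, Matrix.mul_apply, hrow _ _ hi, hE]
  calc A.rank = (E * (A.submatrix f f * E.transpose)).rank := by rw [← hA]
    _ ≤ (A.submatrix f f * E.transpose).rank := Matrix.rank_mul_le_right _ _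
    _ ≤ (A.submatrix f f).rank := Matrix.rank_mul_le_left _ _

lemma rank_le_of_mem_WAspace {K : Type*} [Field K] {n s t : ℕ} (h : 2 * s + t ≤ n) (ht : Odd t)
    {M : Matrix (Fin n) (Fin n) K} (hM : M ∈ WAspace K n s t) : M.rank ≤ 2 * s + t - 1 := by
  obtain ⟨hskew, hdiag, hzero⟩ := hM
  have hskew' : ∀ i j, M i j = -M j i := fun i j => congrFun (congrFun hskew j) i
  let A₁ : Matrix (Fin n) (Fin n) K := Matrix.of fun i j => if i.1 < s then M i j else 0
  let A₂ : Matrix (Fin n) (Fin n) K :=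
    Matrix.of fun i j => if s ≤ i.1 ∧ j.1 < s then M i j else 0
  let A₃ : Matrix (Fin n) (Fin n) K :=
    Matrix.of fun i j => if s ≤ i.1 ∧ s ≤ j.1 then M i j else 0
  have hsum : M = A₁ + (A₂ + A₃) := by
    ext i j
    by_cases hi : i.1 < s
    · simp [A₁, A₂, A₃, hi, Nat.not_le.mpr hi]
    · by_cases hj : j.1 < s
      · simp [A₁, A₂, A₃, hi, hj, Nat.not_lt.mp hi, Nat.not_le.mpr hj]
      · simp [A₁, A₂, A₃, hi, hj, Nat.not_lt.mp hi, Nat.not_lt.mp hj]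
  have h₁ : A₁.rank ≤ s := rank_le_of_rows_eq_zero _ fun i j hi => by
    simp [A₁, Nat.not_lt.mpr hi]
  have h₂ : A₂.rank ≤ s := by
    rw [← Matrix.rank_transpose]
    exact rank_le_of_rows_eq_zero _ fun i j hi => by simp [A₂, Nat.not_lt.mpr hi]
  have h₃ : A₃.rank < t := by
    let f : Fin t → Fin n := fun k => ⟨s + k.1, by omega⟩
    have hf : Function.Injective f := fun a b hab => by
      have := congrArg Fin.val hab
      simp only [f] at this
      omega
    have hrange : ∀ i : Fin n, i ∉ Set.range f → s ≤ i.1 → s + t ≤ i.1 := by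
      intro i hi hs
      by_contra hlt
      exact hi ⟨⟨i.1 - s, by omega⟩, Fin.ext (by simp only [f]; omega)⟩
    refine (rank_le_rank_submatrix f hf A₃ (fun i j hi => ?_) (fun i j hj => ?_)).trans_lt ?_
    · simp only [A₃, Matrix.of_apply]
      split_ifs with hc
      · exact hzero i j (Or.inl ⟨hrange i hi hc.1, hc.2⟩)
      · rfl
    · simp only [A₃, Matrix.of_apply]
      split_ifs with hc
      · exact hzero i j (Or.inr ⟨hc.1, hrange j hj hc.2⟩)
      · rfl
    · have hdet : (A₃.submatrix f f).det = 0 :=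
        det_eq_zero_of_alternating_of_odd (by simpa using ht) _
          (fun i j => by simpa [A₃, f] using hskew' (f i) (f j))
          (fun i => by simpa [A₃, f] using hdiag (f i))
      simpa using rank_lt_card_of_det_eq_zero _ hdet
  have h₂₃ := matrix_rank_add_le A₂ A₃
  have h₁₂₃ := matrix_rank_add_le A₁ (A₂ + A₃)
  rw [← hsum] at h₁₂₃
  omega

/-- `i` is joined to a larger index `j` by the matching: either `i < s` and `j = s + t + i`, or
`i = s + 2k` and `j = s + 2k + 1` both lie in the central block. -/
abbrev Matched (s t i j : ℕ) : Prop :=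
  (i < s ∧ j = s + t + i) ∨ (s ≤ i ∧ (i - s) % 2 = 0 ∧ j = i + 1 ∧ j < s + t)

/-- The signed adjacency matrix of the matching `Matched`, with entry `1` above and `-1` below the
diagonal. -/
def matchingMatrix (K : Type*) [Field K] (n s t : ℕ) : Matrix (Fin n) (Fin n) K :=
  Matrix.of fun i j =>
    (if Matched s t i.1 j.1 then 1 else 0) - (if Matched s t j.1 i.1 then 1 else 0)

lemma matchingMatrix_mem (K : Type*) [Field K] (n s t : ℕ) :
    matchingMatrix K n s t ∈ WAspace K n s t := by
  refine ⟨?_, fun i => by simp [matchingMatrix], fun i j hij => ?_⟩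
  · ext i j
    simp [matchingMatrix]
  · have h₁ : ¬Matched s t i.1 j.1 := by unfold Matched; omega
    have h₂ : ¬Matched s t j.1 i.1 := by unfold Matched; omega
    simp only [matchingMatrix, Matrix.of_apply, if_neg h₁, if_neg h₂, sub_zero]

lemma le_rank_matchingMatrix (K : Type*) [Field K] {n s t : ℕ} (h : 2 * s + t ≤ n) (ht : Odd t) :
    2 * s + t - 1 ≤ (matchingMatrix K n s t).rank := by
  obtain ⟨m, rfl⟩ := ht
  -- `f` enumerates the covered indices, skipping the uncovered `s + t - 1`; `g` gives the partners.
  let f : Fin (2 * s + (2 * m + 1) - 1) → Fin n := fun k =>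
    ⟨if k.1 < s + 2 * m then k.1 else k.1 + 1, by split_ifs <;> omega⟩
  let g : Fin (2 * s + (2 * m + 1) - 1) → Fin n := fun k =>
    ⟨if k.1 < s then s + (2 * m + 1) + k.1
      else if k.1 < s + 2 * m then (if (k.1 - s) % 2 = 0 then k.1 + 1 else k.1 - 1)
      else k.1 - (s + 2 * m), by split_ifs <;> omega⟩
  let ε : Fin (2 * s + (2 * m + 1) - 1) → K := fun k =>
    if k.1 < s ∨ (k.1 < s + 2 * m ∧ (k.1 - s) % 2 = 0) then 1 else -1
  have hε : ∀ k, ε k ≠ 0 := fun k => by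
    simp only [ε]
    split_ifs <;> simp
  have hfg : (matchingMatrix K n s (2 * m + 1)).submatrix f g = Matrix.diagonal ε := by
    ext a b
    have h₁ : Matched s (2 * m + 1) (f a).1 (g b).1 ↔
        a.1 = b.1 ∧ (a.1 < s ∨ (a.1 < s + 2 * m ∧ (a.1 - s) % 2 = 0)) := by
      simp only [Matched, f, g]
      split_ifs <;> omega
    have h₂ : Matched s (2 * m + 1) (g b).1 (f a).1 ↔
        a.1 = b.1 ∧ ¬(a.1 < s ∨ (a.1 < s + 2 * m ∧ (a.1 - s) % 2 = 0)) := by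
      simp only [Matched, f, g]
      split_ifs <;> omega
    simp only [matchingMatrix, Matrix.submatrix_apply, Matrix.of_apply, h₁, h₂,
      Matrix.diagonal_apply, Fin.ext_iff, ε]
    by_cases hab : a.1 = b.1
    · by_cases hc : a.1 < s ∨ (a.1 < s + 2 * m ∧ (a.1 - s) % 2 = 0)
      · rw [if_pos ⟨hab, hc⟩, if_neg fun hn => hn.2 hc, if_pos hab, if_pos hc, sub_zero]
      · rw [if_neg fun hp => hc hp.2, if_pos ⟨hab, hc⟩, if_pos hab, if_neg hc, zero_sub]
    · simp [hab]
  have hrank : (Matrix.diagonal ε).rank = 2 * s + (2 * m + 1) - 1 := by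
    rw [Matrix.rank_of_det_ne_zero, Fintype.card_fin]
    rw [Matrix.det_diagonal]
    exact Finset.prod_ne_zero_iff.mpr fun k _ => hε k
  rw [← hfg] at hrank
  exact hrank.symm.le.trans (Matrix.rank_submatrix_le _ f g)

theorem urank_WAspace (K : Type*) [Field K] (n s t : ℕ) (h : 2 * s + t ≤ n)
    (ht : Odd t) (hst : 1 ≤ s + t) :
    (∀ M ∈ WAspace K n s t, M.rank ≤ 2 * s + t - 1) ∧
      (∃ M ∈ WAspace K n s t, M.rank = 2 * s + t - 1) :=
  ⟨fun _ hM => rank_le_of_mem_WAspace h ht hM, matchingMatrix K n s t, matchingMatrix_mem K n s t,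
    (rank_le_of_mem_WAspace h ht (matchingMatrix_mem K n s t)).antisymm
      (le_rank_matchingMatrix K h ht)⟩
end

section
/- Let K be a field with more than 2 elements and S a linear subspace of symmetric n×n matrices over K with dim S > 3 and every matrix of S of rank at most 2. Then S is congruent to a subspace of WS_{n,1,0}(K), i.e., there is an invertible P such that every matrix of P S P^T is zero outside the first row and first column. -/
/-!
View `S` as a linear space `T` of symmetric bilinear forms on `V = Kⁿ`, all of whose `3 × 3` Gram
determinants vanish. It suffices to find a hyperplane of `V` on which every form of `S` vanishes
(`exists_functional`); a basis of that hyperplane, preceded by one more vector, gives the rows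
of `P`.

As `dim S > 1`, some `M ∈ S` has a nonsingular Gram matrix `A` on a pair `u₁, u₂` (`exists_minor`).
Then `V = ⟨u₁, u₂⟩ ⊕ R` with `R` the `M`-orthogonal of `u₁, u₂`. For `N ∈ S` let `B_N` be its Gram
matrix on `u₁, u₂`, and for `x ∈ R` put `c_N(x) = (N(u₁,x), N(u₂,x)) ∈ K²`. The Gram determinant of
`tM + N` on `(u₁,u₂,x)` and `(u₁,u₂,y)` is a polynomial of degree at most two in `t`. As `K` has at
least three elements its coefficients vanish: `N(x,y) = 0`, `c_N(x)ᵀ adj(A) c_N(y) = 0` and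
`c_N(x)ᵀ adj(B_N) c_N(y) = 0` (`coeffs`). The second relation shows that `c_N(R)` lies in a line
for each `N` (`parallel_same`).

If all `c_N(x)` vanish, `N` is determined by `B_N`, so `dim S ≤ 3`. If all `c_N(x)`, for all `N`
and `x`, lie in one line `⟨(p,q)⟩`, then the third relation shows that the hyperplane
`R ⊕ ⟨q u₁ - p u₂⟩` has the required property. Otherwise `N ↦ c_N(x₀)` is onto `K²` for some
`x₀ ∈ R`, which forces `c_N(x) = λ(x) c_N(x₀)`; the third relation then shows that `N` is determined
by `N(u₁,u₂)` and `c_N(x₀)`, so again `dim S ≤ 3` (`no_independent`). The last case only occurs in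
characteristic two, but no separation according to the characteristic is needed.
-/

open Matrix

section Forms

variable {K V T : Type*} [Field K] [AddCommGroup V] [Module K V] [AddCommGroup T] [Module K T]

lemma finrank_le_three (f g h : T →ₗ[K] K)
    (H : ∀ N, f N = 0 → g N = 0 → h N = 0 → N = 0) : Module.finrank K T ≤ 3 := by
  have hinj : Function.Injective (LinearMap.pi ![f, g, h]) := by
    rw [← LinearMap.ker_eq_bot, LinearMap.ker_eq_bot']
    intro N hN
    exact H N (by simpa using congrFun hN 0) (by simpa using congrFun hN 1)
      (by simpa using congrFun hN 2)
  simpa using LinearMap.finrank_le_finrank_of_injective hinj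

/-- Some form of the space has a nonzero principal `2 × 2` minor (symmetry plays no role here).
Otherwise each form is determined by its diagonal values, and if `M(u,u) ≠ 0` for some `M`, then
`N(u,u) = 0` forces `N = 0`: the space would have dimension at most one. -/
lemma exists_minor (β : T →ₗ[K] V →ₗ[K] V →ₗ[K] K)
    (hinj : ∀ N, (∀ x y, β N x y = 0) → N = 0)
    (hdim : 3 < Module.finrank K T) :
    ∃ M u v, β M u u * β M v v - β M u v * β M u v ≠ 0 := by
  by_contra! hc
  have key : ∀ N, (∀ v, β N v v = 0) → N = 0 := by
    intro N h
    refine hinj N fun x y => ?_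
    have := hc N x y
    rw [h x, h y] at this
    simpa using this
  by_cases h0 : ∃ M u, β M u u ≠ 0
  · obtain ⟨M, u, hu⟩ := h0
    have : Module.finrank K T ≤ 3 := by
      refine finrank_le_three ((LinearMap.applyₗ u).comp ((LinearMap.applyₗ u).comp β)) 0 0 ?_
      intro N hN _ _
      have hN : β N u u = 0 := by simpa using hN
      refine key N fun v => ?_
      have h1 := hc M u v
      have h2 := hc N u v
      have h3 := hc (M + N) u v
      simp only [map_add, LinearMap.add_apply] at h3
      have h4 : β N u v = 0 := by
        rw [hN] at h2
        simpa using h2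
      rw [hN, h4] at h3
      have : β M u u * β N v v = 0 := by linear_combination h3 - h1
      exact (mul_eq_zero.1 this).resolve_left hu
    omega
  · push Not at h0
    have : Module.finrank K T ≤ 3 := finrank_le_three 0 0 0 fun N _ _ _ => key N (h0 N)
    omega

/-- The three relations obtained from the coefficients of `t ↦ det(tM + N)`, where the Gram
determinant is taken on `(u, v, x)` and `(u, v, y)` with `x, y` both `M`-orthogonal to `u, v`. -/
lemma coeffs (β : T →ₗ[K] V →ₗ[K] V →ₗ[K] K)
    (hs : ∀ N x y, β N x y = β N y x)
    (hG : ∀ N u v x y, Matrix.det !![β N u u, β N u v, β N u y; β N v u, β N v v, β N v y;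
      β N x u, β N x v, β N x y] = 0)
    {s : K} (hs0 : s ≠ 0) (hs1 : s ≠ 1)
    {M : T} {u v : V} (hA : β M u u * β M v v - β M u v * β M u v ≠ 0)
    (N : T) {x y : V} (hxu : β M u x = 0) (hxv : β M v x = 0)
    (hyu : β M u y = 0) (hyv : β M v y = 0) :
    β N x y = 0 ∧
    β N u x * β M v v * β N u y - β N u x * β M u v * β N v y - β N v x * β M u v * β N u y
      + β N v x * β M u u * β N v y = 0 ∧
    β N u x * β N v v * β N u y - β N u x * β N u v * β N v y - β N v x * β N u v * β N u y
      + β N v x * β N u u * β N v y = 0 := by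
  have hM : β M x y = 0 := by
    have h := hG M u v x y
    rw [Matrix.det_fin_three] at h
    simp only [hs M x u, hs M x v, hs M v u, hxu, hxv, hyu, hyv, Matrix.of_apply, Matrix.cons_val,
      Matrix.cons_val', Matrix.cons_val_zero, Matrix.cons_val_one, Matrix.cons_val_fin_one] at h
    have : (β M u u * β M v v - β M u v * β M u v) * β M x y = 0 := by linear_combination h
    exact (mul_eq_zero.1 this).resolve_left hA
  have P : ∀ t : K, (t * β M u u + β N u u) * (t * β M v v + β N v v) * β N x y
      - (t * β M u v + β N u v) ^ 2 * β N x y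
      - (t * (β N u x * β M v v * β N u y - β N u x * β M u v * β N v y
          - β N v x * β M u v * β N u y + β N v x * β M u u * β N v y)
        + (β N u x * β N v v * β N u y - β N u x * β N u v * β N v y - β N v x * β N u v * β N u y
          + β N v x * β N u u * β N v y)) = 0 := by
    intro t
    have h := hG (t • M + N) u v x y
    rw [Matrix.det_fin_three] at h
    simp only [map_add, map_smul, LinearMap.add_apply, LinearMap.smul_apply, smul_eq_mul,
      hs M x u, hs M x v, hs M v u, hs N x u, hs N x v, hs N v u, hxu, hxv, hyu, hyv, hM,
      Matrix.of_apply, Matrix.cons_val,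
      Matrix.cons_val', Matrix.cons_val_zero, Matrix.cons_val_one, Matrix.cons_val_fin_one] at h
    linear_combination h
  have p0 := P 0
  have p1 := P 1
  have ps := P s
  -- The leading coefficient is a second divided difference at the nodes `0, 1, s`.
  have hd : β N x y = 0 := by
    have : (s * (s - 1) * (β M u u * β M v v - β M u v * β M u v)) * β N x y = 0 := by
      linear_combination ps - s * p1 + (s - 1) * p0
    exact (mul_eq_zero.1 this).resolve_left (mul_ne_zero (mul_ne_zero hs0 (sub_ne_zero.2 hs1)) hA)
  rw [hd] at p0 p1
  exact ⟨hd, by linear_combination p0 - p1, by linear_combination -p0⟩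

/-- For a fixed form `N`, the vectors `c_N(x)` for `x ∈ R` are totally isotropic for the
nondegenerate form `adj(A)` on `K²`, hence pairwise proportional. -/
lemma parallel_same (β : T →ₗ[K] V →ₗ[K] V →ₗ[K] K)
    (hs : ∀ N x y, β N x y = β N y x)
    (hG : ∀ N u v x y, Matrix.det !![β N u u, β N u v, β N u y; β N v u, β N v v, β N v y;
      β N x u, β N x v, β N x y] = 0)
    {s : K} (hs0 : s ≠ 0) (hs1 : s ≠ 1)
    {M : T} {u v : V} (hA : β M u u * β M v v - β M u v * β M u v ≠ 0)
    (N : T) {x y : V} (hxu : β M u x = 0) (hxv : β M v x = 0)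
    (hyu : β M u y = 0) (hyv : β M v y = 0) :
    β N u x * β N v y - β N v x * β N u y = 0 := by
  have h1 := (coeffs β hs hG hs0 hs1 hA N hxu hxv hxu hxv).2.1
  have h2 := (coeffs β hs hG hs0 hs1 hA N hxu hxv hyu hyv).2.1
  have h3 := (coeffs β hs hG hs0 hs1 hA N hyu hyv hyu hyv).2.1
  -- Gram determinant of two vectors = (their determinant)² times the determinant of the form.
  have : (β M u u * β M v v - β M u v * β M u v) *
      (β N u x * β N v y - β N v x * β N u y) ^ 2 = 0 := by
    linear_combination (β N u y * β M v v * β N u y - β N u y * β M u v * β N v y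
      - β N v y * β M u v * β N u y + β N v y * β M u u * β N v y) * h1
      - (β N u x * β M v v * β N u y - β N u x * β M u v * β N v y - β N v x * β M u v * β N u y
      + β N v x * β M u u * β N v y) * h2
  exact pow_eq_zero_iff (two_ne_zero) |>.1 ((mul_eq_zero.1 this).resolve_left hA)

/-- The splitting `V = ⟨u, v⟩ ⊕ R`, with the coordinates given by Cramer's rule. -/
lemma exists_decomp (β : T →ₗ[K] V →ₗ[K] V →ₗ[K] K)
    (hs : ∀ N x y, β N x y = β N y x)
    {M : T} {u v : V} (hA : β M u u * β M v v - β M u v * β M u v ≠ 0) (w : V) :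
    ∃ a b : K, ∃ x : V, β M u x = 0 ∧ β M v x = 0 ∧ w = a • u + b • v + x ∧
      (β M u u * β M v v - β M u v * β M u v) * a = β M v v * β M u w - β M u v * β M v w ∧
      (β M u u * β M v v - β M u v * β M u v) * b = β M u u * β M v w - β M u v * β M u w := by
  set D := β M u u * β M v v - β M u v * β M u v with hD
  have ha : D * ((β M v v * β M u w - β M u v * β M v w) / D) =
    β M v v * β M u w - β M u v * β M v w := mul_div_cancel₀ _ hA
  have hb : D * ((β M u u * β M v w - β M u v * β M u w) / D) =
    β M u u * β M v w - β M u v * β M u w := mul_div_cancel₀ _ hA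
  generalize (β M v v * β M u w - β M u v * β M v w) / D = a at ha
  generalize (β M u u * β M v w - β M u v * β M u w) / D = b at hb
  refine ⟨a, b, w - a • u - b • v, ?_, ?_, by abel, ha, hb⟩
  · apply (mul_eq_zero.1 _).resolve_left hA
    simp only [map_sub, map_smul, smul_eq_mul]
    linear_combination (-β M u u) * ha - β M u v * hb + β M u w * hD
  · apply (mul_eq_zero.1 _).resolve_left hA
    simp only [map_sub, map_smul, smul_eq_mul, hs M v u]
    linear_combination (-β M u v) * ha - β M v v * hb + β M v w * hD

lemma eq_zero_of_decomp (β : T →ₗ[K] V →ₗ[K] V →ₗ[K] K)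
    (hs : ∀ N x y, β N x y = β N y x) (hinj : ∀ N, (∀ x y, β N x y = 0) → N = 0)
    {M : T} {u v : V} (hA : β M u u * β M v v - β M u v * β M u v ≠ 0) {N : T}
    (huu : β N u u = 0) (huv : β N u v = 0) (hvv : β N v v = 0)
    (hu : ∀ x, β M u x = 0 → β M v x = 0 → β N u x = 0)
    (hv : ∀ x, β M u x = 0 → β M v x = 0 → β N v x = 0)
    (hR : ∀ x y, β M u x = 0 → β M v x = 0 → β M u y = 0 → β M v y = 0 → β N x y = 0) :
    N = 0 := by
  refine hinj N fun w w' => ?_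
  obtain ⟨a, b, x, hx1, hx2, rfl, -, -⟩ := exists_decomp β hs hA w
  obtain ⟨a', b', y, hy1, hy2, rfl, -, -⟩ := exists_decomp β hs hA w'
  simp [huu, huv, hvv, hs N v u, hs N x u, hs N x v, hu x hx1 hx2, hu y hy1 hy2, hv x hx1 hx2,
    hv y hy1 hy2, hR x y hx1 hx2 hy1 hy2]

/-- For fixed `x ∈ R`, the vectors `c_N(x)` cannot span `K²`: otherwise every `c_N(y)` would be
`λ(y) c_N(x)`, and `N` would be determined by `N(u,v)`, `N(u,x)` and `N(v,x)`. -/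
lemma no_independent (β : T →ₗ[K] V →ₗ[K] V →ₗ[K] K)
    (hs : ∀ N x y, β N x y = β N y x) (hinj : ∀ N, (∀ x y, β N x y = 0) → N = 0)
    (hG : ∀ N u v x y, Matrix.det !![β N u u, β N u v, β N u y; β N v u, β N v v, β N v y;
      β N x u, β N x v, β N x y] = 0)
    (hdim : 3 < Module.finrank K T)
    {s : K} (hs0 : s ≠ 0) (hs1 : s ≠ 1)
    {M : T} {u v : V} (hA : β M u u * β M v v - β M u v * β M u v ≠ 0)
    (N N' : T) {x : V} (hxu : β M u x = 0) (hxv : β M v x = 0) :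
    β N u x * β N' v x - β N v x * β N' u x = 0 := by
  by_contra hδ
  set δ := β N u x * β N' v x - β N v x * β N' u x with hδd
  obtain ⟨E, hE1, hE2⟩ : ∃ E, β E u x = 1 ∧ β E v x = 0 := by
    refine ⟨δ⁻¹ • (β N' v x • N - β N v x • N'), ?_, ?_⟩ <;>
    simp only [map_smul, map_sub, LinearMap.smul_apply, LinearMap.sub_apply, smul_eq_mul]
    · rw [inv_mul_eq_iff_eq_mul₀ hδ, hδd]; ring
    · ring
  obtain ⟨F, hF1, hF2⟩ : ∃ F, β F u x = 0 ∧ β F v x = 1 := by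
    refine ⟨δ⁻¹ • (β N u x • N' - β N' u x • N), ?_, ?_⟩ <;>
    simp only [map_smul, map_sub, LinearMap.smul_apply, LinearMap.sub_apply, smul_eq_mul]
    · ring
    · rw [inv_mul_eq_iff_eq_mul₀ hδ, hδd]; ring
  have par : ∀ G y, β M u y = 0 → β M v y = 0 → β G u x * β G v y - β G v x * β G u y = 0 :=
    fun G y h1 h2 => parallel_same β hs hG hs0 hs1 hA G hxu hxv h1 h2
  have prop : ∀ G y, β M u y = 0 → β M v y = 0 →
      β G u y = β E u y * β G u x ∧ β G v y = β E u y * β G v x := by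
    intro G y h1 h2
    have e1 := par E y h1 h2
    have e2 := par F y h1 h2
    have e3 := par (E + F) y h1 h2
    have e4 := par G y h1 h2
    have e5 := par (G + E) y h1 h2
    have e6 := par (G + F) y h1 h2
    simp only [map_add, LinearMap.add_apply, hE1, hE2, hF1, hF2] at e1 e2 e3 e5 e6
    have e1' : β E v y = 0 := by linear_combination e1
    have e2' : β F u y = 0 := by linear_combination -e2
    rw [e1', e2'] at e3
    have e3' : β F v y = β E u y := by linear_combination e3
    rw [e1'] at e5
    rw [e2', e3'] at e6
    exact ⟨by linear_combination e4 - e6, by linear_combination e5 - e4⟩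
  have : Module.finrank K T ≤ 3 := by
    refine finrank_le_three ((LinearMap.applyₗ v).comp ((LinearMap.applyₗ u).comp β))
      ((LinearMap.applyₗ x).comp ((LinearMap.applyₗ u).comp β))
      ((LinearMap.applyₗ x).comp ((LinearMap.applyₗ v).comp β)) ?_
    intro G hg1 hg2 hg3
    replace hg1 : β G u v = 0 := by simpa using hg1
    replace hg2 : β G u x = 0 := by simpa using hg2
    replace hg3 : β G v x = 0 := by simpa using hg3
    have d := fun N => (coeffs β hs hG hs0 hs1 hA N hxu hxv hxu hxv).2.2
    have dE := d E
    have dF := d F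
    have dGE := d (G + E)
    have dGF := d (G + F)
    simp only [map_add, LinearMap.add_apply, hE1, hE2, hF1, hF2, hg1, hg2, hg3] at dE dF dGE dGF
    refine eq_zero_of_decomp β hs hinj hA (by linear_combination dGF - dF) hg1
      (by linear_combination dGE - dE) ?_ ?_ ?_
    · intro y h1 h2
      rw [(prop G y h1 h2).1, hg2, mul_zero]
    · intro y h1 h2
      rw [(prop G y h1 h2).2, hg3, mul_zero]
    · intro y z h1 h2 h3 h4
      exact (coeffs β hs hG hs0 hs1 hA G h1 h2 h3 h4).1
  omega

/-- All vectors `c_N(x)`, for all forms `N` and all `x ∈ R`, are pairwise proportional. -/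
lemma parallel_all (β : T →ₗ[K] V →ₗ[K] V →ₗ[K] K)
    (hs : ∀ N x y, β N x y = β N y x) (hinj : ∀ N, (∀ x y, β N x y = 0) → N = 0)
    (hG : ∀ N u v x y, Matrix.det !![β N u u, β N u v, β N u y; β N v u, β N v v, β N v y;
      β N x u, β N x v, β N x y] = 0)
    (hdim : 3 < Module.finrank K T)
    {s : K} (hs0 : s ≠ 0) (hs1 : s ≠ 1)
    {M : T} {u v : V} (hA : β M u u * β M v v - β M u v * β M u v ≠ 0)
    (N N' : T) {x y : V} (hxu : β M u x = 0) (hxv : β M v x = 0)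
    (hyu : β M u y = 0) (hyv : β M v y = 0) :
    β N u x * β N' v y - β N v x * β N' u y = 0 := by
  have h1 := parallel_same β hs hG hs0 hs1 hA N hxu hxv hyu hyv
  have h2 := parallel_same β hs hG hs0 hs1 hA N' hxu hxv hyu hyv
  have h3 := parallel_same β hs hG hs0 hs1 hA (N + N') hxu hxv hyu hyv
  have h5 := no_independent β hs hinj hG hdim hs0 hs1 hA N N' hyu hyv
  simp only [map_add, LinearMap.add_apply] at h3
  -- If `c_N(x)` and `c_{N'}(y)` were independent, `c_N(y)`, proportional to both, would vanish.
  have g1 : (β N u x * β N' v y - β N v x * β N' u y) * β N u y = 0 := by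
    linear_combination (β N u x) * h5 + (β N' u y) * h1
  have g2 : (β N u x * β N' v y - β N v x * β N' u y) * β N v y = 0 := by
    linear_combination (β N v x) * h5 + (β N' v y) * h1
  have : (β N u x * β N' v y - β N v x * β N' u y) ^ 2 = 0 := by
    linear_combination (β N u x * β N' v y - β N v x * β N' u y) * (h3 - h1 - h2)
      - β N' u x * g2 + β N' v x * g1
  exact pow_eq_zero_iff (two_ne_zero) |>.1 this

/-- The forms of `T` vanish on a common hyperplane, given as the kernel of a nonzero functional. -/
lemma exists_functional (β : T →ₗ[K] V →ₗ[K] V →ₗ[K] K)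
    (hs : ∀ N x y, β N x y = β N y x) (hinj : ∀ N, (∀ x y, β N x y = 0) → N = 0)
    (hG : ∀ N u v x y, Matrix.det !![β N u u, β N u v, β N u y; β N v u, β N v v, β N v y;
      β N x u, β N x v, β N x y] = 0)
    (hdim : 3 < Module.finrank K T)
    {s : K} (hs0 : s ≠ 0) (hs1 : s ≠ 1) :
    ∃ φ : V →ₗ[K] K, φ ≠ 0 ∧ ∀ N x y, φ x = 0 → φ y = 0 → β N x y = 0 := by
  obtain ⟨M, u, v, hA⟩ := exists_minor β hinj hdim
  have hco := fun N {x y} => coeffs β hs hG hs0 hs1 hA N (x := x) (y := y)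
  obtain ⟨N₀, x₀, h1, h2, hne⟩ : ∃ N x, β M u x = 0 ∧ β M v x = 0 ∧
      ¬ (β N u x = 0 ∧ β N v x = 0) := by
    by_contra! hc
    have : Module.finrank K T ≤ 3 := by
      refine finrank_le_three ((LinearMap.applyₗ u).comp ((LinearMap.applyₗ u).comp β))
        ((LinearMap.applyₗ v).comp ((LinearMap.applyₗ u).comp β))
        ((LinearMap.applyₗ v).comp ((LinearMap.applyₗ v).comp β)) ?_
      intro G hg1 hg2 hg3
      exact eq_zero_of_decomp β hs hinj hA (by simpa using hg1) (by simpa using hg2)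
        (by simpa using hg3) (fun x h1 h2 => (hc G x h1 h2).1) (fun x h1 h2 => (hc G x h1 h2).2)
        (fun x y h1 h2 h3 h4 => (hco G h1 h2 h3 h4).1)
    omega
  have hpar : ∀ N x, β M u x = 0 → β M v x = 0 →
      β N₀ u x₀ * β N v x - β N₀ v x₀ * β N u x = 0 := fun N x h3 h4 =>
    parallel_all β hs hinj hG hdim hs0 hs1 hA N₀ N h1 h2 h3 h4
  set p := β N₀ u x₀ with hp
  set q := β N₀ v x₀ with hq
  -- Every form vanishes at `(w, w)` for `w = q u - p v`.
  have hw : ∀ N, p * p * β N v v - 2 * p * q * β N u v + q * q * β N u u = 0 := by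
    intro N
    obtain ⟨k, hk1, hk2⟩ : ∃ k, β N u x₀ = k * p ∧ β N v x₀ = k * q := by
      have h := hpar N x₀ h1 h2
      by_cases hp0 : p = 0
      · have hq0 : q ≠ 0 := fun h => hne ⟨hp0, h⟩
        refine ⟨β N v x₀ / q, ?_, by field_simp⟩
        field_simp
        linear_combination -h
      · refine ⟨β N u x₀ / p, by field_simp, ?_⟩
        field_simp
        linear_combination h
    have e0 := (hco N₀ h1 h2 h1 h2).2.2
    have e1 := (hco N h1 h2 h1 h2).2.2
    have e2 := (hco (N₀ + N) h1 h2 h1 h2).2.2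
    simp only [map_add, LinearMap.add_apply, hk1, hk2, ← hp, ← hq] at e0 e1 e2
    by_cases hk : k = 0
    · subst hk
      linear_combination e2 - e0
    · have : k ^ 2 * (p * p * β N v v - 2 * p * q * β N u v + q * q * β N u u) = 0 := by
        linear_combination e1
      exact (mul_eq_zero.1 this).resolve_left (pow_ne_zero 2 hk)
  -- Up to the factor `det A`, this sends `a u + b v + x` to `a p + b q`.
  refine ⟨p • (β M v v • β M u - β M u v • β M v) + q • (β M u u • β M v - β M u v • β M u),
    ?_, ?_⟩
  · intro h0
    have hu := LinearMap.congr_fun h0 u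
    have hv := LinearMap.congr_fun h0 v
    simp only [LinearMap.add_apply, LinearMap.sub_apply, LinearMap.smul_apply, smul_eq_mul,
      LinearMap.zero_apply, hs M v u] at hu hv
    apply hne
    constructor
    · apply (mul_eq_zero.1 _).resolve_left hA
      linear_combination hu
    · apply (mul_eq_zero.1 _).resolve_left hA
      linear_combination hv
  · intro N w w' hφ hφ'
    simp only [LinearMap.add_apply, LinearMap.sub_apply, LinearMap.smul_apply,
      smul_eq_mul] at hφ' hφ
    -- A vector of the hyperplane is `k w + x` with `x ∈ R`.
    have dec : ∀ w, p * (β M v v * β M u w - β M u v * β M v w)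
        + q * (β M u u * β M v w - β M u v * β M u w) = 0 →
        ∃ (k : K) (x : V), β M u x = 0 ∧ β M v x = 0 ∧ w = k • (q • u - p • v) + x := by
      intro w hw
      obtain ⟨a, b, x, hx1, hx2, hx, ha, hb⟩ := exists_decomp β hs hA w
      have hab : p * a + q * b = 0 := by
        apply (mul_eq_zero.1 _).resolve_left hA
        linear_combination hw + p * ha + q * hb
      obtain ⟨k, hk1, hk2⟩ : ∃ k, a = k * q ∧ b = -(k * p) := by
        by_cases hp0 : p = 0
        · have hq0 : q ≠ 0 := fun h => hne ⟨hp0, h⟩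
          refine ⟨a / q, by field_simp, ?_⟩
          field_simp
          linear_combination hab
        · refine ⟨-b / p, ?_, by field_simp⟩
          field_simp
          linear_combination hab
      refine ⟨k, x, hx1, hx2, ?_⟩
      rw [hx, hk1, hk2]
      module
    obtain ⟨k, x, hx1, hx2, rfl⟩ := dec w hφ
    obtain ⟨l, y, hy1, hy2, rfl⟩ := dec w' hφ'
    have e1 := hpar N x hx1 hx2
    have e2 := hpar N y hy1 hy2
    have e3 := (hco N hx1 hx2 hy1 hy2).1
    simp only [map_add, map_sub, map_smul, LinearMap.add_apply, LinearMap.sub_apply,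
      LinearMap.smul_apply, smul_eq_mul, hs N v u, hs N x u, hs N x v, e3]
    linear_combination k * l * hw N - l * e1 - k * e2

end Forms

theorem sym_rank_two_classification (K : Type*) [Field K] (hK : 2 < Cardinal.mk K) (n : ℕ)
    (S : Submodule K (Matrix (Fin n) (Fin n) K))
    (hSym : ∀ M ∈ S, Mᵀ = M)
    (hdim : 3 < Module.finrank K S)
    (hrk : ∀ M ∈ S, M.rank ≤ 2) :
    ∃ P : Matrix (Fin n) (Fin n) K, IsUnit P ∧
      ∀ M ∈ S, ∀ i j : Fin n, 1 ≤ i.1 → 1 ≤ j.1 → (P * M * Pᵀ) i j = 0 := by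
  obtain ⟨s, hs⟩ := Cardinal.exists_notMem_of_length_lt [(0 : K), 1] (by simpa using hK)
  simp only [List.mem_cons, List.not_mem_nil, or_false, not_or] at hs
  let β : S →ₗ[K] (Fin n → K) →ₗ[K] (Fin n → K) →ₗ[K] K :=
    (Matrix.toLinearMap₂' (S₁ := K) (S₂ := K) (N₂ := K) (n := Fin n) (m := Fin n)
      K).toLinearMap.comp S.subtype
  have hβ : ∀ (N : S) x y, β N x y = x ⬝ᵥ (N.1 *ᵥ y) := fun N x y =>
    Matrix.toLinearMap₂'_apply' N.1 x y
  obtain ⟨φ, hφ0, hφ⟩ := exists_functional β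
    (by
      intro N x y
      rw [hβ, hβ, Matrix.dotProduct_mulVec, dotProduct_comm, ← Matrix.mulVec_transpose,
        hSym N.1 N.2])
    (by
      intro N h
      apply Subtype.ext
      ext i j
      have := h (Pi.single i 1) (Pi.single j 1)
      rw [hβ] at this
      simpa using this)
    (by
      intro N u v x y
      have e : !![β N u u, β N u v, β N u y; β N v u, β N v v, β N v y;
          β N x u, β N x v, β N x y] = Matrix.of ![u, v, x] * N.1 * (Matrix.of ![u, v, y])ᵀ := by
        ext i j
        rw [Matrix.mul_assoc]
        fin_cases i <;> fin_cases j <;>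
          simp [hβ, Matrix.mul_apply, dotProduct, Matrix.mulVec]
      rw [e]
      by_contra hdet
      have h3 := Matrix.rank_of_isUnit _
        ((Matrix.isUnit_iff_isUnit_det _).2 (isUnit_iff_ne_zero.2 hdet))
      have h4 := (Matrix.rank_mul_le_left (Matrix.of ![u, v, x] * N.1) (Matrix.of ![u, v, y])ᵀ)
      have h5 := Matrix.rank_mul_le_right (Matrix.of ![u, v, x]) N.1
      have h6 := hrk N.1 N.2
      simp only [Fintype.card_fin] at h3
      omega)
    hdim hs.1 hs.2
  obtain ⟨e, he⟩ : ∃ e, φ e ≠ 0 := by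
    by_contra! h
    exact hφ0 (LinearMap.ext h)
  obtain _ | m := n
  · exact (he (by rw [Subsingleton.elim e 0, map_zero])).elim
  have hfr : Module.finrank K (LinearMap.ker φ) = m := by
    have h1 := LinearMap.finrank_range_add_finrank_ker φ
    rw [LinearMap.range_eq_top.2 (LinearMap.surjective hφ0)] at h1
    simp at h1
    omega
  let b := Module.finBasisOfFinrankEq K (LinearMap.ker φ) hfr
  let B := Module.Basis.mkFinCons e b
    (by
      intro c x hx h
      have := congrArg φ h
      rw [map_add, map_smul, LinearMap.mem_ker.1 hx] at this
      simpa [he] using this)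
    (by
      intro z
      refine ⟨-(φ z / φ e), ?_⟩
      rw [LinearMap.mem_ker]
      simp [he])
  have hB : ∀ i : Fin (m + 1), 1 ≤ i.1 → φ (B i) = 0 := by
    intro i hi
    obtain ⟨k, rfl⟩ := Fin.exists_succ_eq.2 (show i ≠ 0 by rintro rfl; simp at hi)
    simp [B, Module.Basis.coe_mkFinCons]
  refine ⟨Matrix.of fun i => B i, ?_, ?_⟩
  · rw [← Matrix.linearIndependent_rows_iff_isUnit]
    exact B.linearIndependent
  · intro M hM i j hi hj
    have := hφ ⟨M, hM⟩ (B i) (B j) (hB i hi) (hB j hj)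
    rw [hβ] at this
    rw [Matrix.mul_assoc, ← this]
    simp [Matrix.mul_apply, dotProduct, Matrix.mulVec]
end

section
/- Let K be a field with more than 2 elements and S a linear subspace of symmetric n×n matrices over K with dim S > 6 and every matrix of S of rank at most 3. Then S is congruent to a subspace of WS_{n,1,1}(K). -/
open Matrix

/-!
Write `β M x y = xᵀ M y`. The conclusion says that on some hyperplane all forms of `S` are multiples
of the square of a single linear form (`Compressed`); `exists_adapted` turns this into the
congruence.

The proof rests on a form `B` of rank two in `S` which is a hyperbolic plane plus zero. Take `A` in
`S` of maximal rank `r ≤ 3` and a nonzero `B` in `S` vanishing on an `r`-dimensional subspace on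
which `A` is nondegenerate; it exists because this imposes at most six linear conditions. The
bordered Gram determinants of `A + t B` vanish for all `t`; they are quadratic in `t`, so with at
least three scalars their linear coefficients vanish, which gives `B = [[0, C], [Cᵀ, 0]]`.
As the rank of `B` is at most three, `C` has rank one
(`RankThreeFamily.exists_hyperbolic`).

The `t²` coefficients of the `4 × 4` Gram determinants of `M + t B` show that all forms have rank at
most one on the radical `Z` of `B` (`IsHyperbolic.rank_one`), hence are multiples of a single
square there. Let `Z'` be the kernel of that square. Each `M` is then described by its restriction
to a complement of `Z'` of dimension two or three and by the `2`-row matrix of pairings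
of a hyperbolic basis `e₁, e₂` with `Z'`. These matrices again have rank at most one, so either all
their columns lie on a line `K u`, or each is determined by one fixed column (`dichotomy`). In the
first case `Z` and `v = u₂ e₁ - u₁ e₂` span the required hyperplane: when `Z' ≠ Z`, one
more Gram determinant shows that the forms have rank at most one on the plane spanned by `v` and a
complement of `Z'` in `Z` (`RankThreeFamily.plane`). In the second case, and when `Z' ≠ Z` and all
the `2`-row matrices are zero, counting parameters gives `dim S ≤ 6`, against the hypothesis.
-/

/-! ### Families of symmetric forms of rank at most three -/

section Forms

variable {K V W : Type*} [Field K] [AddCommGroup V] [Module K V] [AddCommGroup W] [Module K W]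

/-- A linear family `β` of symmetric bilinear forms on `V`, faithfully parametrised by `W`, all of
rank at most three (every `4 × 4` Gram determinant vanishes), and of dimension greater than six.
The last property is recorded as `six`: any six evaluations `M ↦ β M x y` have a common nonzero
zero. -/
structure RankThreeFamily (β : W →ₗ[K] V →ₗ[K] V →ₗ[K] K) : Prop where
  symm : ∀ M x y, β M x y = β M y x
  det4 : ∀ M (x y : Fin 4 → V), (Matrix.of fun i j => β M (x i) (y j)).det = 0
  inj : ∀ M, (∀ x y, β M x y = 0) → M = 0
  six : ∀ a b : Fin 6 → V, ∃ M, M ≠ 0 ∧ ∀ i, β M (a i) (b i) = 0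

/-- The form `β B` is a hyperbolic plane on `e₁, e₂` plus a zero form on the orthogonal complement
of that plane. -/
structure IsHyperbolic (β : W →ₗ[K] V →ₗ[K] V →ₗ[K] K) (B : W) (e₁ e₂ : V) : Prop where
  h11 : β B e₁ e₁ = 0
  h22 : β B e₂ e₂ = 0
  h12 : β B e₁ e₂ = 1
  ker : ∀ z, β B z e₁ = 0 → β B z e₂ = 0 → ∀ w, β B z w = 0

variable {β : W →ₗ[K] V →ₗ[K] V →ₗ[K] K}

/-- The vanishing of a `4 × 4` Gram determinant, expanded along the first row. -/
lemma RankThreeFamily.gram (hβ : RankThreeFamily β) (M : W) (x₁ x₂ x₃ x₄ y₁ y₂ y₃ y₄ : V) :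
    β M x₁ y₁ * (β M x₂ y₂ * (β M x₃ y₃ * β M x₄ y₄ - β M x₃ y₄ * β M x₄ y₃)
      - β M x₂ y₃ * (β M x₃ y₂ * β M x₄ y₄ - β M x₃ y₄ * β M x₄ y₂)
      + β M x₂ y₄ * (β M x₃ y₂ * β M x₄ y₃ - β M x₃ y₃ * β M x₄ y₂))
    - β M x₁ y₂ * (β M x₂ y₁ * (β M x₃ y₃ * β M x₄ y₄ - β M x₃ y₄ * β M x₄ y₃)
      - β M x₂ y₃ * (β M x₃ y₁ * β M x₄ y₄ - β M x₃ y₄ * β M x₄ y₁)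
      + β M x₂ y₄ * (β M x₃ y₁ * β M x₄ y₃ - β M x₃ y₃ * β M x₄ y₁))
    + β M x₁ y₃ * (β M x₂ y₁ * (β M x₃ y₂ * β M x₄ y₄ - β M x₃ y₄ * β M x₄ y₂)
      - β M x₂ y₂ * (β M x₃ y₁ * β M x₄ y₄ - β M x₃ y₄ * β M x₄ y₁)
      + β M x₂ y₄ * (β M x₃ y₁ * β M x₄ y₂ - β M x₃ y₂ * β M x₄ y₁))
    - β M x₁ y₄ * (β M x₂ y₁ * (β M x₃ y₂ * β M x₄ y₃ - β M x₃ y₃ * β M x₄ y₂)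
      - β M x₂ y₂ * (β M x₃ y₁ * β M x₄ y₃ - β M x₃ y₃ * β M x₄ y₁)
      + β M x₂ y₃ * (β M x₃ y₁ * β M x₄ y₂ - β M x₃ y₂ * β M x₄ y₁)) = 0 := by
  have h := hβ.det4 M ![x₁, x₂, x₃, x₄] ![y₁, y₂, y₃, y₄]
  simp [Matrix.det_succ_row_zero, Fin.sum_univ_succ, Fin.succAbove] at h
  linear_combination h

/-- Comparing the `t²` coefficients of the Gram determinants of `M + t B`, with `B` hyperbolic,
bounds the rank of `M` on the radical of `B` by one. -/
lemma IsHyperbolic.rank_one (hβ : RankThreeFamily β) (hK : ∃ k : K, k ≠ 0 ∧ k ≠ 1) {B : W}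
    {e₁ e₂ : V} (hB : IsHyperbolic β B e₁ e₂) (M : W) (z z' w w' : V)
    (hz : ∀ v, β B z v = 0) (hz' : ∀ v, β B z' v = 0)
    (hw : ∀ v, β B w v = 0) (hw' : ∀ v, β B w' v = 0) :
    β M z w * β M z' w' = β M z w' * β M z' w := by
  obtain ⟨k, hk0, hk1⟩ := hK
  have key := fun t : K => hβ.gram (M + t • B) e₁ e₂ z z' e₁ e₂ w w'
  have h21 : β B e₂ e₁ = 1 := by rw [hβ.symm]; exact hB.h12
  have a1 : ∀ v, β B v w = 0 := fun v => by rw [hβ.symm]; exact hw v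
  have a2 : ∀ v, β B v w' = 0 := fun v => by rw [hβ.symm]; exact hw' v
  simp only [map_add, map_smul, LinearMap.add_apply, LinearMap.smul_apply, smul_eq_mul, hz, hz',
    a1, a2, h21, hB.h11, hB.h22, hB.h12, mul_zero, mul_one, add_zero] at key
  have : (k * (k - 1)) * (β M z w * β M z' w' - β M z w' * β M z' w) = 0 := by
    linear_combination (-1) * (key k) + k * key 1 - (k - 1) * key 0
  have hk : k * (k - 1) ≠ 0 := mul_ne_zero hk0 (sub_ne_zero.2 hk1)
  exact sub_eq_zero.1 ((mul_eq_zero.1 this).resolve_left hk)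

/-- If `M` vanishes on the span of `z, w`, then its Gram determinant on `e₁, e₂, z, w` is the square
of the minor of `M` with rows `e₁, e₂` and columns `z, w`, which therefore vanishes. -/
lemma RankThreeFamily.cross (hβ : RankThreeFamily β) (M : W) (e₁ e₂ z w : V)
    (h1 : β M z z = 0) (h2 : β M z w = 0) (h3 : β M w w = 0) :
    β M e₁ z * β M e₂ w = β M e₁ w * β M e₂ z := by
  have key := hβ.gram M e₁ e₂ z w e₁ e₂ z w
  have h4 : β M w z = 0 := by rw [hβ.symm]; exact h2
  rw [h1, h2, h3, h4, hβ.symm M z e₁, hβ.symm M z e₂, hβ.symm M w e₁, hβ.symm M w e₂] at key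
  have : (β M e₁ z * β M e₂ w - β M e₁ w * β M e₂ z) ^ 2 = 0 := by linear_combination key
  exact sub_eq_zero.1 (pow_eq_zero_iff (two_ne_zero) |>.1 this)

/-! ### Two-row matrices of rank at most one -/

/-- A linear space of matrices of rank at most one with two rows (`β M e₁ z` and `β M e₂ z`, for
`z` in the set `Z`) either has all its columns on a common line, spanned by `(u₁, u₂)`, or is
determined by a single column. -/
lemma dichotomy (e₁ e₂ : V) (Z : Set V)
    (h : ∀ M, ∀ z ∈ Z, ∀ w ∈ Z, β M e₁ z * β M e₂ w = β M e₁ w * β M e₂ z) :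
    (∃ u₁ u₂ : K, (u₁ ≠ 0 ∨ u₂ ≠ 0) ∧ ∀ M, ∀ z ∈ Z, u₂ * β M e₁ z = u₁ * β M e₂ z) ∨
    (∃ z₁ ∈ Z, ∀ M, β M e₁ z₁ = 0 → β M e₂ z₁ = 0 →
      ∀ z ∈ Z, β M e₁ z = 0 ∧ β M e₂ z = 0) := by
  by_cases h0 : ∀ M, ∀ z ∈ Z, β M e₁ z = 0 ∧ β M e₂ z = 0
  · exact Or.inl ⟨1, 0, Or.inl one_ne_zero, fun M z hz => by simp [h0 M z hz]⟩
  by_contra! hcon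
  obtain ⟨hc1, hc2⟩ := hcon
  push Not at h0
  obtain ⟨M₁, z₁, hz₁, hM₁⟩ := h0
  have hu : β M₁ e₁ z₁ ≠ 0 ∨ β M₁ e₂ z₁ ≠ 0 := by
    by_contra! hh
    exact hM₁ hh.1 hh.2
  obtain ⟨M₂, z₂, hz₂, hM₂⟩ := hc1 _ _ hu
  obtain ⟨M, hMa, hMb, z, hz, hMz⟩ := hc2 z₁ hz₁
  have pol : ∀ M N, ∀ z ∈ Z, ∀ w ∈ Z, β M e₁ z * β N e₂ w + β N e₁ z * β M e₂ w
      = β M e₁ w * β N e₂ z + β N e₁ w * β M e₂ z := by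
    intro M N z hz w hw
    have := h (M + N) z hz w hw
    simp only [map_add, LinearMap.add_apply] at this
    linear_combination this - h M z hz w hw - h N z hz w hw
  -- every column of `M` is a multiple of `u`, the column of `M₁` at `z₁`
  have c1 : ∀ w ∈ Z, β M₁ e₁ z₁ * β M e₂ w = β M₁ e₂ z₁ * β M e₁ w := by
    intro w hw
    have := pol M₁ M z₁ hz₁ w hw
    rw [hMa, hMb] at this
    linear_combination this
  have par : ∀ w ∈ Z, ∃ c, β M e₁ w = c * β M₁ e₁ z₁ ∧ β M e₂ w = c * β M₁ e₂ z₁ := by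
    intro w hw
    have := c1 w hw
    rcases hu with hu | hu
    · exact ⟨β M e₁ w / β M₁ e₁ z₁, by field_simp, by field_simp; linear_combination this⟩
    · exact ⟨β M e₂ w / β M₁ e₂ z₁, by field_simp; linear_combination - this, by field_simp⟩
  obtain ⟨c, hca, hcb⟩ := par z hz
  obtain ⟨d, hda, hdb⟩ := par z₂ hz₂
  have q1 := pol M M₂ z₁ hz₁ z₂ hz₂
  have q2 := h M₂ z₁ hz₁ z₂ hz₂
  have q3 := pol M₁ M₂ z₁ hz₁ z₂ hz₂
  have q4 := pol M M₂ z hz z₂ hz₂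
  have q5 := h M₁ z₁ hz₁ z₂ hz₂
  rw [hMa, hMb, hda, hdb] at q1
  rw [hca, hcb, hda, hdb] at q4
  have hne : β M₁ e₁ z₁ * β M₂ e₂ z₂ - β M₁ e₂ z₁ * β M₂ e₁ z₂ ≠ 0 :=
    fun h => hM₂ (by linear_combination -h)
  by_cases hd : d = 0
  · subst hd
    have : c * (β M₁ e₁ z₁ * β M₂ e₂ z₂ - β M₁ e₂ z₁ * β M₂ e₁ z₂) = 0 := by
      linear_combination q4
    have hc := (mul_eq_zero.1 this).resolve_right hne
    subst hc
    exact hMz (by simpa using hca) (by simpa using hcb)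
  · have r1 : β M₂ e₁ z₁ * β M₁ e₂ z₁ - β M₂ e₂ z₁ * β M₁ e₁ z₁ = 0 := by
      have : d * (β M₂ e₁ z₁ * β M₁ e₂ z₁ - β M₂ e₂ z₁ * β M₁ e₁ z₁) = 0 := by
        linear_combination q1
      exact (mul_eq_zero.1 this).resolve_left hd
    have r2 : β M₂ e₁ z₁ = 0 := by
      refine (mul_eq_zero.1 ?_).resolve_left hne
      linear_combination β M₁ e₁ z₁ * q2 - β M₂ e₁ z₂ * r1
    have r3 : β M₂ e₂ z₁ = 0 := by
      refine (mul_eq_zero.1 ?_).resolve_left hne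
      linear_combination β M₁ e₂ z₁ * q2 - β M₂ e₂ z₂ * r1
    rw [r2, r3] at q3
    exact hne (by linear_combination q3)

/-- If the column of `M` at `z₁` is `l • u`, the Gram determinant on `e₁, e₂, z₀, z₁` is `-l²` times
the determinant of the form on the plane `⟨v, z₀⟩`, where `v = u₂ e₁ - u₁ e₂`. So the latter vanishes
for `l ≠ 0`; for `l = 0` it is recovered from its values on `M₁ + t M`, where `M₁` has column
`l₁ • u` with `l₁ ≠ 0`. -/
lemma RankThreeFamily.plane (hβ : RankThreeFamily β) (hK : ∃ k : K, k ≠ 0 ∧ k ≠ 1)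
    {e₁ e₂ z₀ z₁ : V} (h01 : ∀ M, β M z₀ z₁ = 0) (h11 : ∀ M, β M z₁ z₁ = 0) {M₁ : W} {u₁ u₂ : K}
    {l₁ : K} (hl : l₁ ≠ 0)
    (h1 : β M₁ e₁ z₁ = l₁ * u₁) (h2 : β M₁ e₂ z₁ = l₁ * u₂)
    {M : W} {l : K} (hM1 : β M e₁ z₁ = l * u₁) (hM2 : β M e₂ z₁ = l * u₂) :
    β M (u₂ • e₁ - u₁ • e₂) (u₂ • e₁ - u₁ • e₂) * β M z₀ z₀
      = β M (u₂ • e₁ - u₁ • e₂) z₀ ^ 2 := by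
  have base : ∀ N l, l ≠ 0 → β N e₁ z₁ = l * u₁ → β N e₂ z₁ = l * u₂ →
      β N (u₂ • e₁ - u₁ • e₂) (u₂ • e₁ - u₁ • e₂) * β N z₀ z₀
        - β N (u₂ • e₁ - u₁ • e₂) z₀ ^ 2 = 0 := by
    intro N l hl a b
    have key := hβ.gram N e₁ e₂ z₀ z₁ e₁ e₂ z₀ z₁
    rw [hβ.symm N z₁ e₁, hβ.symm N z₁ e₂, hβ.symm N z₁ z₀, h01, h11, hβ.symm N z₀ e₁,
      hβ.symm N z₀ e₂, hβ.symm N e₂ e₁, a, b] at key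
    refine (mul_eq_zero.1 ?_).resolve_left (pow_ne_zero 2 hl)
    simp only [map_sub, map_smul, LinearMap.sub_apply, LinearMap.smul_apply, smul_eq_mul]
    rw [hβ.symm N e₂ e₁]
    linear_combination - key
  refine sub_eq_zero.1 ?_
  by_cases hl0 : l = 0
  · subst hl0
    obtain ⟨k, hk0, hk1⟩ := hK
    have b0 := base M₁ l₁ hl h1 h2
    have b1 := base (M₁ + M) l₁ hl (by simp [h1, hM1]) (by simp [h2, hM2])
    have b2 := base (M₁ + k • M) l₁ hl (by simp [h1, hM1]) (by simp [h2, hM2])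
    generalize u₂ • e₁ - u₁ • e₂ = v at *
    simp only [map_add, map_smul, LinearMap.add_apply, LinearMap.smul_apply, smul_eq_mul]
      at b1 b2
    refine (mul_eq_zero.1 ?_).resolve_left (mul_ne_zero hk0 (sub_ne_zero.2 hk1))
    linear_combination b2 - k * b1 + (k - 1) * b0
  · exact base M l hl0 hM1 hM2

/-! ### Compression in the presence of a hyperbolic form -/

/-- The conclusion in coordinate-free form: on the hyperplane `φ = 0` all forms are multiples of
the square of the linear form `ψ`. -/
def Compressed (β : W →ₗ[K] V →ₗ[K] V →ₗ[K] K) : Prop :=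
  ∃ φ ψ : V →ₗ[K] K, ∀ M x y, φ x = 0 → ψ x = 0 → φ y = 0 → β M x y = 0

lemma IsHyperbolic.decomp (hβ : RankThreeFamily β) {B : W} {e₁ e₂ : V}
    (hB : IsHyperbolic β B e₁ e₂) (x : V) :
    ∃ z, (∀ v, β B z v = 0) ∧ x = β B e₂ x • e₁ + β B e₁ x • e₂ + z := by
  refine ⟨x - β B e₂ x • e₁ - β B e₁ x • e₂, ?_, by abel⟩
  have h21 : β B e₂ e₁ = 1 := by rw [hβ.symm]; exact hB.h12
  apply hB.ker
  · simp [hB.h11, h21, hβ.symm B x]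
  · simp [hB.h12, hB.h22, hβ.symm B x]

lemma exists_eq_mul_pair {u₁ u₂ p q : K} (hu : u₁ ≠ 0 ∨ u₂ ≠ 0) (h : u₂ * p = u₁ * q) :
    ∃ l, p = l * u₁ ∧ q = l * u₂ := by
  rcases hu with hu | hu
  · exact ⟨p / u₁, by field_simp, by field_simp; linear_combination -h⟩
  · exact ⟨q / u₂, by field_simp; linear_combination h, by field_simp⟩

/-- Compression when all forms vanish on the radical of the hyperbolic form. -/
lemma IsHyperbolic.compressed_of_isotropic (hβ : RankThreeFamily β) {B : W} {e₁ e₂ : V}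
    (hB : IsHyperbolic β B e₁ e₂)
    (hN : ∀ M z w, (∀ v, β B z v = 0) → (∀ v, β B w v = 0) → β M z w = 0) :
    Compressed β := by
  have hd := hB.decomp hβ
  rcases dichotomy (β := β) e₁ e₂ {z | ∀ v, β B z v = 0} (fun M z hz w hw =>
      hβ.cross M e₁ e₂ z w (hN M z z hz hz) (hN M z w hz hw) (hN M w w hw hw)) with
    ⟨u₁, u₂, hu, h⟩ | ⟨z₁, hz₁, h⟩
  · -- the hyperplane is spanned by the radical of `B` and `u₂ e₁ - u₁ e₂`
    have main : ∀ M x y, β B e₁ x = 0 → β B e₂ x = 0 →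
        u₁ * β B e₂ y + u₂ * β B e₁ y = 0 → β M x y = 0 := by
      intro M x y h1 h2 hy
      obtain ⟨z, hz, hx⟩ := hd x
      obtain ⟨w, hw, hy'⟩ := hd y
      rw [h1, h2, zero_smul, zero_smul, add_zero, zero_add] at hx
      obtain ⟨l, hp, hq⟩ := exists_eq_mul_pair hu (h M z hz)
      rw [hy', hx]
      simp only [map_add, map_smul, smul_eq_mul]
      rw [hN M z w hz hw, hβ.symm M z, hβ.symm M z, hp, hq]
      linear_combination l * hy
    rcases hu with hu | hu
    · refine ⟨u₁ • β B e₂ + u₂ • β B e₁, β B e₁, fun M x y h1 h2 h3 => ?_⟩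
      simp only [LinearMap.add_apply, LinearMap.smul_apply, smul_eq_mul] at h1 h3
      refine main M x y h2 ?_ h3
      rw [h2] at h1
      simpa [hu] using h1
    · refine ⟨u₁ • β B e₂ + u₂ • β B e₁, β B e₂, fun M x y h1 h2 h3 => ?_⟩
      simp only [LinearMap.add_apply, LinearMap.smul_apply, smul_eq_mul] at h1 h3
      refine main M x y ?_ h2 h3
      rw [h2] at h1
      simpa [hu] using h1
  · exfalso
    obtain ⟨M, hM, h6⟩ := hβ.six ![e₁, e₁, e₂, e₁, e₂, 0] ![e₁, e₂, e₂, z₁, z₁, 0]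
    simp [Fin.forall_fin_succ] at h6
    obtain ⟨a1, a2, a3, a4, a5⟩ := h6
    have hX := h M a4 a5
    apply hM
    apply hβ.inj
    intro x y
    obtain ⟨z, hz, hx⟩ := hd x
    obtain ⟨w, hw, hy⟩ := hd y
    rw [hx, hy]
    simp [a1, a2, a3, hβ.symm M e₂ e₁, hβ.symm M z, hX z hz, hX w hw, hN M w z hw hz]

/-- Compression when some form is nonzero on the radical of the hyperbolic form: there all forms
are multiples of one square, whose kernel is the set `Z'` of the proof. -/
lemma IsHyperbolic.compressed_of_not_isotropic (hβ : RankThreeFamily β)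
    (hK : ∃ k : K, k ≠ 0 ∧ k ≠ 1) {B : W} {e₁ e₂ : V} (hB : IsHyperbolic β B e₁ e₂)
    {M₀ : W} {z₀ : V} (hz₀ : ∀ v, β B z₀ v = 0) (hμ : β M₀ z₀ z₀ ≠ 0) :
    Compressed β := by
  set Z' : Set V := {z | (∀ v, β B z v = 0) ∧ β M₀ z z₀ = 0} with hZ'
  have hR := hB.rank_one hβ hK
  -- `Z'` is orthogonal to the radical of `B` under every form
  have hN : ∀ M, ∀ z ∈ Z', ∀ w, (∀ v, β B w v = 0) → β M z w = 0 := by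
    rintro M z ⟨hz, hz0⟩ w hw
    have s1 := hR M₀ z z₀ z z₀ hz hz₀ hz hz₀
    have s2 := hR M z z₀ z z₀ hz hz₀ hz hz₀
    have s3 := hR (M + M₀) z z₀ z z₀ hz hz₀ hz hz₀
    have s4 := hR M z w z w hz hw hz hw
    rw [hβ.symm _ z₀ z] at s1 s2 s3
    rw [hβ.symm _ w z] at s4
    have t1 : β M₀ z z = 0 := by
      refine (mul_eq_zero.1 ?_).resolve_right hμ
      rw [s1, hz0, zero_mul]
    simp only [map_add, LinearMap.add_apply, hz0, t1] at s3
    have t2 : β M z z = 0 := by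
      refine (mul_eq_zero.1 ?_).resolve_right hμ
      linear_combination s3 - s2
    rw [t2, zero_mul] at s4
    exact mul_self_eq_zero.1 s4.symm
  have hd : ∀ x, ∃ c : K, ∃ z ∈ Z', x = β B e₂ x • e₁ + β B e₁ x • e₂ + c • z₀ + z := by
    intro x
    obtain ⟨z, hz, hx⟩ := hB.decomp hβ x
    refine ⟨β M₀ z z₀ / β M₀ z₀ z₀, z - (β M₀ z z₀ / β M₀ z₀ z₀) • z₀, ⟨?_, ?_⟩, ?_⟩
    · intro v
      simp [hz, hz₀]
    · simp [hμ]
    · rw [add_add_sub_cancel]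
      exact hx
  have hdet : ∀ M, β M e₁ e₁ = 0 → β M e₁ e₂ = 0 → β M e₂ e₂ = 0 → β M e₁ z₀ = 0 →
      β M e₂ z₀ = 0 → β M z₀ z₀ = 0 → (∀ z ∈ Z', β M e₁ z = 0 ∧ β M e₂ z = 0) → M = 0 := by
    intro M a1 a2 a3 a4 a5 a6 hX
    apply hβ.inj
    intro x y
    obtain ⟨c, z, hz, hx⟩ := hd x
    obtain ⟨d, w, hw, hy⟩ := hd y
    rw [hx, hy]
    simp [a1, a2, a3, a4, a5, a6, hβ.symm M e₂ e₁, hβ.symm M z₀, hβ.symm M z e₁,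
      hβ.symm M z e₂, hX z hz, hX w hw, hN M z hz w hw.1, hN M z hz z₀ hz₀, hN M w hw z₀ hz₀]
  have hX : ∃ M₁, ∃ z ∈ Z', ¬ (β M₁ e₁ z = 0 ∧ β M₁ e₂ z = 0) := by
    by_contra! hcon
    obtain ⟨M, hM, h6⟩ := hβ.six ![e₁, e₁, e₂, e₁, e₂, z₀] ![e₁, e₂, e₂, z₀, z₀, z₀]
    simp [Fin.forall_fin_succ] at h6
    obtain ⟨a1, a2, a3, a4, a5, a6⟩ := h6
    exact hM (hdet M a1 a2 a3 a4 a5 a6 (hcon M))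
  obtain ⟨M₁, z₂, hz₂, hM₁⟩ := hX
  have h01 : ∀ z ∈ Z', ∀ M, β M z₀ z = 0 := fun z hz M => by
    rw [hβ.symm]; exact hN M z hz z₀ hz₀
  have h11 : ∀ z ∈ Z', ∀ M, β M z z = 0 := fun z hz M => hN M z hz z hz.1
  rcases dichotomy (β := β) e₁ e₂ Z' (fun M z hz w hw =>
      hβ.cross M e₁ e₂ z w (hN M z hz z hz.1) (hN M z hz w hw.1) (hN M w hw w hw.1)) with
    ⟨u₁, u₂, hu, h⟩ | ⟨z₁, hz₁, h⟩
  · obtain ⟨l₁, hp₁, hq₁⟩ := exists_eq_mul_pair hu (h M₁ z₂ hz₂)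
    have hl₁ : l₁ ≠ 0 := by
      rintro rfl
      exact hM₁ ⟨by simpa using hp₁, by simpa using hq₁⟩
    have hQ : ∀ M, β M (u₂ • e₁ - u₁ • e₂) (u₂ • e₁ - u₁ • e₂) * β M z₀ z₀
        = β M (u₂ • e₁ - u₁ • e₂) z₀ ^ 2 := by
      intro M
      obtain ⟨l, hp, hq⟩ := exists_eq_mul_pair hu (h M z₂ hz₂)
      exact hβ.plane hK (h01 z₂ hz₂) (h11 z₂ hz₂) hl₁ hp₁ hq₁ hp hq
    have hvZ : ∀ M, ∀ z ∈ Z', β M (u₂ • e₁ - u₁ • e₂) z = 0 := by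
      intro M z hz
      simp [h M z hz]
    have hdv : ∀ x, u₁ * β B e₂ x + u₂ * β B e₁ x = 0 →
        ∃ a c : K, ∃ z ∈ Z', x = a • (u₂ • e₁ - u₁ • e₂) + c • z₀ + z := by
      intro x hx
      obtain ⟨c, z, hz, hx'⟩ := hd x
      obtain ⟨a, ha, hb⟩ := exists_eq_mul_pair (u₁ := u₂) (u₂ := -u₁) (p := β B e₂ x)
        (q := β B e₁ x) (by rcases hu with hu | hu <;> simp [hu]) (by linear_combination -hx)
      refine ⟨a, c, z, hz, ?_⟩
      rw [ha, hb] at hx'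
      rw [hx']
      module
    generalize u₂ • e₁ - u₁ • e₂ = v at *
    -- the vector `w` of the plane `⟨v, z₀⟩` orthogonal to `z₀` under `M₀`
    obtain ⟨s, hs⟩ : ∃ s, β M₀ v z₀ = s * β M₀ z₀ z₀ := ⟨β M₀ v z₀ / β M₀ z₀ z₀, by field_simp⟩
    obtain ⟨w, hw⟩ : ∃ w, w = v - s • z₀ := ⟨_, rfl⟩
    have hv : v = w + s • z₀ := by rw [hw]; abel
    subst hv
    have hQ' : ∀ M, β M w w * β M z₀ z₀ = β M w z₀ ^ 2 := by
      intro M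
      have := hQ M
      simp only [map_add, map_smul, LinearMap.add_apply, LinearMap.smul_apply, smul_eq_mul] at this
      rw [hβ.symm M z₀ w] at this
      linear_combination this
    have hw0 : β M₀ w z₀ = 0 := by
      simpa using hs
    have hww0 : β M₀ w w = 0 := by
      refine (mul_eq_zero.1 ?_).resolve_right hμ
      rw [hQ', hw0]; simp
    have hww : ∀ M, β M w w = 0 := by
      intro M
      have a := hQ' M
      have b := hQ' (M + M₀)
      simp only [map_add, LinearMap.add_apply, hww0, hw0] at b
      refine (mul_eq_zero.1 ?_).resolve_right hμ
      linear_combination b - a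
    have hwz : ∀ M, β M w z₀ = 0 := by
      intro M
      have a := hQ' M
      rw [hww, zero_mul] at a
      exact pow_eq_zero_iff two_ne_zero |>.1 a.symm
    have hwZ : ∀ M, ∀ z ∈ Z', β M w z = 0 := by
      intro M z hz
      simpa [h01 z hz M] using hvZ M z hz
    refine ⟨u₁ • β B e₂ + u₂ • β B e₁, β M₀ z₀, fun M x y hx hx0 hy => ?_⟩
    obtain ⟨a, c, z, hz, rfl⟩ := hdv x (by simpa using hx)
    obtain ⟨a', c', z', hz', rfl⟩ := hdv y (by simpa using hy)
    have hc : a * s + c = 0 := by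
      refine (mul_eq_zero.1 ?_).resolve_right hμ
      simp only [map_add, map_smul, smul_eq_mul, h01 z hz, hβ.symm M₀ z₀ w, hw0] at hx0
      linear_combination hx0
    have hx' : a • (w + s • z₀) + c • z₀ + z = a • w + z := by
      have : a • (w + s • z₀) + c • z₀ + z = a • w + (a * s + c) • z₀ + z := by module
      rw [this, hc, zero_smul, add_zero]
    rw [hx']
    simp [hww, hwz, hwZ M z' hz', hβ.symm M z w, hwZ M z hz, hN M z hz z₀ hz₀,
      hN M z hz z' hz'.1]
  · exfalso
    have hu : β M₁ e₁ z₁ ≠ 0 ∨ β M₁ e₂ z₁ ≠ 0 := by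
      by_contra! hh
      exact hM₁ (h M₁ hh.1 hh.2 z₂ hz₂)
    obtain ⟨u₁, hu₁⟩ : ∃ u, u = β M₁ e₁ z₁ := ⟨_, rfl⟩
    obtain ⟨u₂, hu₂⟩ : ∃ u, u = β M₁ e₂ z₁ := ⟨_, rfl⟩
    rw [← hu₁, ← hu₂] at hu
    have hQ : ∀ M, β M e₁ z₁ = 0 → β M e₂ z₁ = 0 →
        β M (u₂ • e₁ - u₁ • e₂) (u₂ • e₁ - u₁ • e₂) * β M z₀ z₀
          = β M (u₂ • e₁ - u₁ • e₂) z₀ ^ 2 := by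
      intro M hp hq
      exact hβ.plane hK (h01 z₁ hz₁) (h11 z₁ hz₁) (one_ne_zero)
        (by rw [one_mul, hu₁]) (by rw [one_mul, hu₂]) (l := 0) (by simpa using hp)
        (by simpa using hq)
    -- complete `v = u₂ e₁ - u₁ e₂` to a basis of the hyperbolic plane
    obtain ⟨e, he1, he2⟩ : ∃ e, (∃ a b : K, e₁ = a • e + b • (u₂ • e₁ - u₁ • e₂)) ∧
        (∃ a b : K, e₂ = a • e + b • (u₂ • e₁ - u₁ • e₂)) := by
      rcases hu with hu | hu
      · refine ⟨e₁, ⟨1, 0, by simp⟩, ⟨u₁⁻¹ * u₂, -u₁⁻¹, ?_⟩⟩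
        rw [smul_sub, smul_smul, smul_smul, neg_mul, neg_mul, inv_mul_cancel₀ hu]
        module
      · refine ⟨e₂, ⟨u₂⁻¹ * u₁, u₂⁻¹, ?_⟩, ⟨1, 0, by simp⟩⟩
        rw [smul_sub, smul_smul, smul_smul, inv_mul_cancel₀ hu]
        module
    generalize u₂ • e₁ - u₁ • e₂ = v at *
    have hdet' : ∀ M, β M e₁ z₁ = 0 → β M e₂ z₁ = 0 → β M e e = 0 → β M e v = 0 →
        β M e z₀ = 0 → β M v v = 0 → β M v z₀ = 0 → β M z₀ z₀ = 0 → M = 0 := by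
      intro M a1 a2 a3 a4 a5 a6 a7 a8
      have a9 : β M v e = 0 := by rw [hβ.symm]; exact a4
      obtain ⟨a, b, h1⟩ := he1
      obtain ⟨c, d, h2⟩ := he2
      apply hdet M _ _ _ _ _ a8 (h M a1 a2)
      all_goals first | rw [h1, h2] | rw [h1] | rw [h2]
      all_goals simp [a3, a4, a5, a6, a7, a9]
    -- six evaluations cut out `M ≠ 0` and `N ≠ 0` which on `⟨v, z₀⟩` are multiples of the squares
    -- of the two coordinates, so that `M + N` has rank two there
    obtain ⟨M, hM, h6⟩ := hβ.six ![e₁, e₂, e, e, e, z₀] ![z₁, z₁, e, v, z₀, z₀]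
    obtain ⟨N, hN', h6'⟩ := hβ.six ![e₁, e₂, e, e, e, v] ![z₁, z₁, e, v, z₀, v]
    simp [Fin.forall_fin_succ] at h6 h6'
    obtain ⟨a1, a2, a3, a4, a5, a6⟩ := h6
    obtain ⟨b1, b2, b3, b4, b5, b6⟩ := h6'
    have q1 := hQ M a1 a2
    have q2 := hQ N b1 b2
    have q3 := hQ (M + N) (by simp [a1, b1]) (by simp [a2, b2])
    rw [a6, mul_zero] at q1
    rw [b6, zero_mul] at q2
    have r1 : β M v z₀ = 0 := pow_eq_zero_iff two_ne_zero |>.1 q1.symm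
    have r2 : β N v z₀ = 0 := pow_eq_zero_iff two_ne_zero |>.1 q2.symm
    simp [a6, b6, r1, r2] at q3
    rcases q3 with q3 | q3
    · exact hM (hdet' M a1 a2 a3 a4 a5 q3 r1 a6)
    · exact hN' (hdet' N b1 b2 b3 b4 b5 b6 r2 q3)

lemma IsHyperbolic.compressed (hβ : RankThreeFamily β) (hK : ∃ k : K, k ≠ 0 ∧ k ≠ 1) {B : W}
    {e₁ e₂ : V} (hB : IsHyperbolic β B e₁ e₂) : Compressed β := by
  by_cases hN : ∀ M z w, (∀ v, β B z v = 0) → (∀ v, β B w v = 0) → β M z w = 0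
  · exact hB.compressed_of_isotropic hβ hN
  push Not at hN
  obtain ⟨M, z, w, hz, hw, hne⟩ := hN
  have := hB.rank_one hβ hK M z w z w hz hw hz hw
  rw [hβ.symm M w z] at this
  have hzz : β M z z ≠ 0 := by
    intro h0
    rw [h0, zero_mul] at this
    exact hne (mul_self_eq_zero.1 this.symm)
  exact hB.compressed_of_not_isotropic hβ hK hz hzz

/-! ### Existence of a hyperbolic form -/

/-- Let `β A` be nondegenerate on the span of `a` and have the largest rank `r ≤ 3` in the family.
A nonzero `B` vanishing on that span, which exists by the dimension hypothesis, is hyperbolic: the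
linear term in `t` of the bordered Gram determinants of `A + t B` shows that `B` also vanishes on
the orthogonal complement of the span under `A`. Its rank is then twice that of its off-diagonal
block, so it is two. -/
lemma RankThreeFamily.exists_hyperbolic (hβ : RankThreeFamily β) (hK : ∃ k : K, k ≠ 0 ∧ k ≠ 1)
    {r : ℕ} (hr : r ≤ 3) (A : W) (a : Fin r → V)
    (hG : (Matrix.of fun i j => β A (a i) (a j)).det ≠ 0)
    (hrk : ∀ M (x y : Fin r ⊕ Unit → V), (Matrix.of fun i j => β M (x i) (y j)).det = 0) :
    ∃ B e₁ e₂, IsHyperbolic β B e₁ e₂ := by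
  set G : Matrix (Fin r) (Fin r) K := Matrix.of fun i j => β A (a i) (a j) with hGdef
  obtain ⟨B, hB0, hBa⟩ : ∃ B, B ≠ 0 ∧ ∀ i j, β B (a i) (a j) = 0 := by
    -- `a` is padded with zeros to three vectors
    let c : Fin 3 → V := fun i => if h : i.1 < r then a ⟨i.1, h⟩ else 0
    obtain ⟨B, hB, h6⟩ := hβ.six ![c 0, c 0, c 0, c 1, c 1, c 2] ![c 0, c 1, c 2, c 1, c 2, c 2]
    refine ⟨B, hB, ?_⟩
    have hc : ∀ i j : Fin 3, β B (c i) (c j) = 0 := by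
      simp [Fin.forall_fin_succ] at h6
      obtain ⟨a1, a2, a3, a4, a5, a6⟩ := h6
      intro i j
      fin_cases i <;> fin_cases j <;> first | assumption | (rw [hβ.symm]; assumption)
    intro i j
    have := hc ⟨i.1, i.2.trans_le hr⟩ ⟨j.1, j.2.trans_le hr⟩
    simpa [c] using this
  have hdec : ∀ x, ∃ (c : Fin r → K) (y : V), (∀ i, β A y (a i) = 0) ∧
      x = ∑ i, c i • a i + y := by
    intro x
    refine ⟨G⁻¹ *ᵥ (fun i => β A (a i) x), x - ∑ i, (G⁻¹ *ᵥ (fun i => β A (a i) x)) i • a i,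
      fun i => ?_, by abel⟩
    have h1 : (G *ᵥ (G⁻¹ *ᵥ (fun i => β A (a i) x))) i = β A (a i) x := by
      rw [Matrix.mulVec_mulVec, Matrix.mul_nonsing_inv _ (isUnit_iff_ne_zero.2 hG),
        Matrix.one_mulVec]
    rw [hβ.symm, map_sub, map_sum, sub_eq_zero, ← h1]
    simp only [Matrix.mulVec, dotProduct, map_smul, smul_eq_mul, hGdef, Matrix.of_apply]
    exact Finset.sum_congr rfl fun j _ => mul_comm _ _
  have hperp : ∀ x y, (∀ i, β A x (a i) = 0) → (∀ i, β A y (a i) = 0) → β B x y = 0 := by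
    intro x y hx hy
    let _ : Invertible G := Matrix.invertibleOfIsUnitDet G (isUnit_iff_ne_zero.2 hG)
    let Cx : Matrix Unit (Fin r) K := Matrix.of fun _ j => β B x (a j)
    let Cy : Matrix (Fin r) Unit K := Matrix.of fun i _ => β B (a i) y
    have key : ∀ t : K, β A x y + t * β B x y - t ^ 2 * (Cx * ⅟G * Cy) () () = 0 := by
      intro t
      have h := hrk (A + t • B) (Sum.elim a fun _ => x) (Sum.elim a fun _ => y)
      have hblk : (Matrix.of fun i j => β (A + t • B) (Sum.elim a (fun _ : Unit => x) i)
          (Sum.elim a (fun _ : Unit => y) j)) = Matrix.fromBlocks G (t • Cy) (t • Cx)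
            (Matrix.of fun _ _ => β A x y + t * β B x y) := by
        ext (i | i) (j | j)
        · simp [hBa, hGdef]
        · simp [Cy, hβ.symm A (a i) y, hy]
        · simp [Cx, hx]
        · simp
      rw [hblk, Matrix.det_fromBlocks₁₁] at h
      have h' := (mul_eq_zero.1 h).resolve_left hG
      rw [Matrix.det_unique] at h'
      simp only [Matrix.smul_mul, Matrix.mul_smul, Matrix.sub_apply, Matrix.smul_apply,
        Matrix.of_apply, smul_eq_mul] at h'
      linear_combination h'
    obtain ⟨k, hk0, hk1⟩ := hK
    refine (mul_eq_zero.1 ?_).resolve_left (mul_ne_zero hk0 (sub_ne_zero.2 hk1))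
    linear_combination k ^ 2 * key 1 - key k - (k ^ 2 - 1) * key 0
  have hspan : ∀ c d : Fin r → K, β B (∑ i, c i • a i) (∑ i, d i • a i) = 0 := by
    intro c d
    simp [hBa]
  obtain ⟨i, y, hy, hiy⟩ : ∃ i y, (∀ i, β A y (a i) = 0) ∧ β B (a i) y ≠ 0 := by
    by_contra! hcon
    apply hB0
    apply hβ.inj
    intro x x'
    obtain ⟨c, y, hy, rfl⟩ := hdec x
    obtain ⟨c', y', hy', rfl⟩ := hdec x'
    have h1 : β B y (∑ i, c' i • a i) = 0 := by
      rw [hβ.symm]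
      simp [hcon _ y hy]
    have h2 : β B (∑ i, c i • a i) y' = 0 := by simp [hcon _ y' hy']
    rw [map_add, map_add, LinearMap.add_apply, LinearMap.add_apply, hspan, h1, h2,
      hperp y y' hy hy']
    simp
  -- the off-diagonal block of `B` has rank one
  have hblock : ∀ (c : Fin r → K) (x : V), (∀ i, β A x (a i) = 0) →
      β B (a i) y * β B (∑ j, c j • a j) x = β B (a i) x * β B (∑ j, c j • a j) y := by
    intro c x hx
    apply hβ.cross B (a i) (∑ j, c j • a j) y x (hperp _ _ hy hy) (hperp _ _ hy hx)
      (hperp _ _ hx hx)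
  refine ⟨B, a i, (β B (a i) y)⁻¹ • y, hBa i i, ?_, ?_, ?_⟩
  · simp [hperp y y hy hy]
  · simp [hiy]
  · intro z h1 h2 w
    obtain ⟨c, x, hx, rfl⟩ := hdec z
    obtain ⟨d, x', hx', rfl⟩ := hdec w
    have e1 : β B (∑ j, c j • a j) (a i) = 0 := by simp [hBa]
    rw [map_add, LinearMap.add_apply, e1, zero_add, hβ.symm] at h1
    have h3 : β B (∑ j, c j • a j) y = 0 := by
      rw [map_smul, map_add, LinearMap.add_apply, hperp x y hx hy, add_zero, smul_eq_mul] at h2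
      exact (mul_eq_zero.1 h2).resolve_left (inv_ne_zero hiy)
    have h4 := hblock c x' hx'
    have h5 := hblock d x hx
    rw [h3, mul_zero] at h4
    rw [h1, zero_mul] at h5
    rw [map_add, map_add, LinearMap.add_apply, LinearMap.add_apply, hspan, hperp x x' hx hx',
      hβ.symm B x, (mul_eq_zero.1 h4).resolve_left hiy, (mul_eq_zero.1 h5).resolve_left hiy]
    simp

end Forms

/-! ### From forms to matrices -/

section Matrices

variable {K : Type*} [Field K] {n : ℕ}

lemma det_gram_eq_zero (M : Matrix (Fin n) (Fin n) K) {ι : Type*} [Fintype ι] [DecidableEq ι]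
    (h : M.rank < Fintype.card ι) (x y : ι → Fin n → K) :
    (Matrix.of fun i j => x i ⬝ᵥ M *ᵥ y j).det = 0 := by
  have he : (Matrix.of fun i j => x i ⬝ᵥ M *ᵥ y j) = Matrix.of x * (M * (Matrix.of y)ᵀ) := by
    ext i j
    rfl
  by_contra hne
  have h1 := Matrix.rank_of_isUnit _ ((Matrix.isUnit_iff_isUnit_det _).2 (isUnit_iff_ne_zero.2 hne))
  rw [he] at h1
  have h2 := Matrix.rank_mul_le_right (Matrix.of x) (M * (Matrix.of y)ᵀ)
  have h3 := Matrix.rank_mul_le_left M (Matrix.of y)ᵀ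
  omega

/-- A symmetric matrix is nondegenerate on some subspace whose dimension is its rank. -/
lemma exists_gram_ne_zero (A : Matrix (Fin n) (Fin n) K) (hA : Aᵀ = A) :
    ∃ a : Fin A.rank → Fin n → K, (Matrix.of fun i j => a i ⬝ᵥ A *ᵥ a j).det ≠ 0 := by
  let bs := Module.finBasisOfFinrankEq K (LinearMap.range A.mulVecLin) (n := A.rank) rfl
  have hb : ∀ i, ∃ x, A *ᵥ x = bs i := fun i => (bs i).2
  choose a ha using hb
  refine ⟨a, fun h0 => ?_⟩
  obtain ⟨c, hc, hc0⟩ := Matrix.exists_mulVec_eq_zero_iff.2 h0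
  have h1 : ∀ i, a i ⬝ᵥ A *ᵥ (∑ j, c j • a j) = 0 := by
    intro i
    have := congrFun hc0 i
    simp only [Matrix.mulVec, dotProduct, Matrix.of_apply, Pi.zero_apply] at this
    rw [Matrix.mulVec_sum, dotProduct_sum, ← this]
    refine Finset.sum_congr rfl fun j _ => ?_
    rw [Matrix.mulVec_smul, dotProduct_smul, smul_eq_mul, mul_comm]
    rfl
  have hs : ∀ x y, x ⬝ᵥ A *ᵥ y = (A *ᵥ x) ⬝ᵥ y := by
    intro x y
    rw [Matrix.dotProduct_mulVec, ← Matrix.mulVec_transpose, hA]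
  have h2 : A *ᵥ (∑ j, c j • a j) = 0 := by
    apply dotProduct_eq_zero
    intro y
    rw [dotProduct_comm, hs]
    have hy : A *ᵥ y = ∑ i, bs.repr ⟨A *ᵥ y, y, rfl⟩ i • A *ᵥ a i := by
      have := congrArg Subtype.val (bs.sum_repr ⟨A *ᵥ y, y, rfl⟩)
      simp only [Submodule.coe_sum, Submodule.coe_smul] at this
      refine this.symm.trans (Finset.sum_congr rfl fun i _ => by rw [ha])
    rw [hy, sum_dotProduct]
    refine Finset.sum_eq_zero fun i _ => ?_
    rw [smul_dotProduct, ← hs, h1, smul_zero]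
  have h3 : ∑ j, c j • bs j = 0 := by
    apply Subtype.ext
    rw [Matrix.mulVec_sum] at h2
    simpa [Matrix.mulVec_smul, ha] using h2
  apply hc
  funext j
  exact Fintype.linearIndependent_iff.1 bs.linearIndependent c h3 j

lemma exists_basis_extending (hn : 2 ≤ n) (x y : Fin n → K) (h : LinearIndependent K ![x, y]) :
    ∃ b : Module.Basis (Fin n) K (Fin n → K), b ⟨0, by omega⟩ = x ∧ b ⟨1, by omega⟩ = y := by
  obtain ⟨X, b0, hb0⟩ : ∃ (X : Set (Fin n → K)) (b0 : Module.Basis (Fin 2 ⊕ X) K (Fin n → K)),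
      ∀ i, b0 (Sum.inl i) = ![x, y] i :=
    ⟨_, Module.Basis.sumExtend h, fun i => by simp [Module.Basis.sumExtend]; rfl⟩
  have : Finite (Fin 2 ⊕ X) := Module.Finite.finite_basis b0
  have : Finite X := Finite.sum_right (Fin 2)
  have := Fintype.ofFinite X
  have hcard : Fintype.card X = n - 2 := by
    have := Module.finrank_eq_card_basis b0
    rw [Module.finrank_fin_fun, Fintype.card_sum, Fintype.card_fin] at this
    omega
  let e : Fin 2 ⊕ X ≃ Fin n :=
    ((Equiv.refl _).sumCongr (Fintype.equivFinOfCardEq hcard)).trans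
      (finSumFinEquiv.trans (finCongr (by omega)))
  refine ⟨b0.reindex e, ?_, ?_⟩
  · have : e.symm ⟨0, by omega⟩ = Sum.inl 0 := by
      rw [Equiv.symm_apply_eq]; rfl
    rw [Module.Basis.reindex_apply, this, hb0]
    rfl
  · have : e.symm ⟨1, by omega⟩ = Sum.inl 1 := by
      rw [Equiv.symm_apply_eq]; rfl
    rw [Module.Basis.reindex_apply, this, hb0]
    rfl

lemma exists_independent_pair (hn : 2 ≤ n) (p q : Fin n → K) :
    ∃ x y, LinearIndependent K ![x, y] ∧ (∃ c : K, p = c • x) ∧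
      ∃ d e : K, q = d • x + e • y := by
  have h1 : 1 < Module.finrank K (Fin n → K) := by
    rw [Module.finrank_fin_fun]
    omega
  obtain ⟨x, hx0, c, hc, hx⟩ : ∃ x, x ≠ 0 ∧ ∃ c : K, p = c • x ∧
      (c = 0 → ∃ d : K, q = d • x) := by
    by_cases hp : p = 0
    · by_cases hq : q = 0
      · have : Nontrivial (Fin n → K) := Module.nontrivial_of_finrank_pos (R := K) (by omega)
        obtain ⟨x, hx⟩ := exists_ne (0 : Fin n → K)
        exact ⟨x, hx, 0, by simp [hp], fun _ => ⟨0, by simp [hq]⟩⟩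
      · exact ⟨q, hq, 0, by simp [hp], fun _ => ⟨1, by simp⟩⟩
    · exact ⟨p, hp, 1, by simp, fun h => absurd h one_ne_zero⟩
  by_cases hq : ∃ d : K, d • x = q
  · obtain ⟨d, hd⟩ := hq
    obtain ⟨y, hy⟩ := exists_linearIndependent_pair_of_one_lt_finrank h1 hx0
    exact ⟨x, y, hy, ⟨c, hc⟩, d, 0, by simp [hd]⟩
  · push Not at hq
    exact ⟨x, q, (LinearIndependent.pair_iff' hx0).2 hq, ⟨c, hc⟩, 0, 1, by simp⟩

/-- Coordinates adapted to the flag `{φ = ψ = 0} ⊆ {φ = 0}`. -/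
lemma exists_adapted (hn : 2 ≤ n) (φ ψ : (Fin n → K) →ₗ[K] K) :
    ∃ P : Matrix (Fin n) (Fin n) K, IsUnit P ∧ (∀ i, 1 ≤ i.1 → φ (P i) = 0) ∧
      ∀ i, 2 ≤ i.1 → ψ (P i) = 0 := by
  have hdual : ∀ θ : (Fin n → K) →ₗ[K] K, ∃ p : Fin n → K, ∀ v, θ v = v ⬝ᵥ p := fun θ =>
    ⟨fun i => θ fun j => if i = j then 1 else 0, LinearMap.pi_apply_eq_sum_univ θ⟩
  obtain ⟨p, hp⟩ := hdual φ
  obtain ⟨q, hq⟩ := hdual ψ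
  obtain ⟨x, y, hxy, ⟨c, rfl⟩, d, e, rfl⟩ := exists_independent_pair hn p q
  obtain ⟨b, hb0, hb1⟩ := exists_basis_extending hn x y hxy
  let Q := (Pi.basisFun K (Fin n)).toMatrix b
  have hQ : IsUnit Q.det := by
    rw [← Module.Basis.det_apply]
    exact Module.Basis.isUnit_det _ b
  have hPb : ∀ i j, Q⁻¹ i ⬝ᵥ b j = (1 : Matrix (Fin n) (Fin n) K) i j := by
    intro i j
    rw [← Matrix.nonsing_inv_mul Q hQ]
    rfl
  have h0 : ∀ i : Fin n, 1 ≤ i.1 → Q⁻¹ i ⬝ᵥ x = 0 := by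
    intro i hi
    rw [← hb0, hPb, Matrix.one_apply_ne]
    rintro rfl
    simp at hi
  refine ⟨Q⁻¹, (Matrix.isUnit_iff_isUnit_det _).2 (Matrix.isUnit_nonsing_inv_det Q hQ),
    fun i hi => ?_, fun i hi => ?_⟩
  · rw [hp, dotProduct_smul, h0 i hi, smul_zero]
  · have h1 : Q⁻¹ i ⬝ᵥ y = 0 := by
      rw [← hb1, hPb, Matrix.one_apply_ne]
      rintro rfl
      simp at hi
    rw [hq, dotProduct_add, dotProduct_smul, dotProduct_smul, h0 i (by omega), h1]
    simp

/-- The bilinear forms `(x, y) ↦ xᵀ M y` attached to the matrices `M` of a subspace. -/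
def formFamily (S : Submodule K (Matrix (Fin n) (Fin n) K)) :
    S →ₗ[K] (Fin n → K) →ₗ[K] (Fin n → K) →ₗ[K] K :=
  (Matrix.toLinearMap₂' K).toLinearMap ∘ₗ S.subtype

lemma formFamily_apply (S : Submodule K (Matrix (Fin n) (Fin n) K)) (M : S) (x y : Fin n → K) :
    formFamily S M x y = x ⬝ᵥ M.1 *ᵥ y :=
  Matrix.toLinearMap₂'_apply' _ _ _

lemma rankThreeFamily (S : Submodule K (Matrix (Fin n) (Fin n) K))
    (hSym : ∀ M ∈ S, Mᵀ = M) (hdim : 6 < Module.finrank K S) (hrk : ∀ M ∈ S, M.rank ≤ 3) :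
    RankThreeFamily (formFamily S) where
  symm M x y := by
    rw [formFamily_apply, formFamily_apply, Matrix.dotProduct_mulVec, ← Matrix.mulVec_transpose,
      hSym _ M.2, dotProduct_comm]
  det4 M x y := by
    simp only [formFamily_apply]
    exact det_gram_eq_zero M.1 (by have := hrk _ M.2; simp; omega) x y
  inj M h := by
    have : Matrix.toLinearMap₂' K M.1 = 0 := LinearMap.ext₂ h
    exact Subtype.ext ((LinearEquiv.map_eq_zero_iff _).1 this)
  six a b := by
    let L : S →ₗ[K] (Fin 6 → K) :=
      LinearMap.pi fun i => (LinearMap.applyₗ (b i)) ∘ₗ (LinearMap.applyₗ (a i)) ∘ₗ formFamily S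
    have h := LinearMap.ker_ne_bot_of_finrank_lt (f := L) (by simpa using hdim)
    obtain ⟨M, hM, hM0⟩ := (Submodule.ne_bot_iff _).1 h
    exact ⟨M, hM0, fun i => congrFun (LinearMap.mem_ker.1 hM) i⟩

end Matrices

theorem sym_rank_three_classification (K : Type*) [Field K] (hK : 2 < Cardinal.mk K) (n : ℕ)
    (S : Submodule K (Matrix (Fin n) (Fin n) K))
    (hSym : ∀ M ∈ S, Mᵀ = M)
    (hdim : 6 < Module.finrank K S)
    (hrk : ∀ M ∈ S, M.rank ≤ 3) :
    ∃ P : Matrix (Fin n) (Fin n) K, IsUnit P ∧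
      ∀ M ∈ S, ∀ i j : Fin n,
        ((2 ≤ i.1 ∧ 1 ≤ j.1) ∨ (1 ≤ i.1 ∧ 2 ≤ j.1)) → (P * M * Pᵀ) i j = 0 := by
  have hK' : ∃ k : K, k ≠ 0 ∧ k ≠ 1 := by
    refine Cardinal.exists_ne_ne_of_three_le ?_ 0 1
    have h3 : (3 : Cardinal) = 2 + 1 := by norm_num
    rw [h3]
    exact Cardinal.add_one_le_of_lt hK
  have hn : 2 ≤ n := by
    have h := Submodule.finrank_le S
    rw [Module.finrank_matrix] at h
    simp at h
    nlinarith
  have hβ := rankThreeFamily S hSym hdim hrk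
  obtain ⟨A, hA⟩ : ∃ A : S, ∀ M : S, M.1.rank ≤ A.1.rank := by
    obtain ⟨r, ⟨A, rfl⟩, hr⟩ := Set.exists_max_image (Set.range fun M : S => M.1.rank) id
      ((Set.finite_Iic 3).subset (by rintro _ ⟨M, rfl⟩; exact hrk _ M.2)) ⟨_, 0, rfl⟩
    exact ⟨A, fun M => hr _ ⟨M, rfl⟩⟩
  obtain ⟨a, ha⟩ := exists_gram_ne_zero A.1 (hSym _ A.2)
  obtain ⟨B, e₁, e₂, hB⟩ := hβ.exists_hyperbolic hK' (hrk _ A.2) A a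
    (by simpa only [formFamily_apply] using ha) (fun M x y => by
      simp only [formFamily_apply]
      exact det_gram_eq_zero M.1 (by have := hA M; simp; omega) x y)
  obtain ⟨φ, ψ, h⟩ := hB.compressed hβ hK'
  obtain ⟨P, hP, hφ, hψ⟩ := exists_adapted hn φ ψ
  refine ⟨P, hP, fun M hM i j hij => ?_⟩
  have he : (P * M * Pᵀ) i j = formFamily S ⟨M, hM⟩ (P i) (P j) := by
    rw [formFamily_apply, Matrix.mul_assoc]
    rfl
  rw [he]
  rcases hij with ⟨hi, hj⟩ | ⟨hi, hj⟩
  · exact h _ _ _ (hφ i (by omega)) (hψ i hi) (hφ j hj)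
  · rw [hβ.symm]
    exact h _ _ _ (hφ j (by omega)) (hψ j hj) (hφ i hi)
end
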